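/- arXiv:1907.01832 — 9 statements merged into one kernel-verified Lean document; each statement's English description precedes it below -/
import Mathlib

section
/- For every complex number s with 0 < Re(s) < 1/2, the Mellin-transform definition of the spectral zeta function of the graph ℤ agrees with a ratio of Gamma functions: (1/Γ(s)) ∫₀^∞ e^{-2t} I₀(2t) t^{s-1} dt = 4^{-s} Γ(1/2 − s) / (√π · Γ(1 − s)). -/
open MeasureTheory Real

/-- The modified Bessel function of the first kind of order 0,
`I₀(z) = ∑_{m=0}^∞ (z/2)^{2m} / (m!)²`. -/
noncomputable def besselI0 (z : ℝ) : ℝ :=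
  ∑' m : ℕ, (z / 2) ^ (2 * m) / (Nat.factorial m) ^ 2

/-!
Write `e^{-t} I₀(t) = π⁻¹ ∫₀^π e^{-(1 - cos θ) t} dθ` as a superposition of decaying exponentials:
integrating the exponential series of `e^{t cos θ}` termwise, the odd moments of `cos` vanish and
the even ones give the Bessel coefficients. The Mellin transform of `e^{-r t}` is `r^{-s} Γ(s)`, so
by Fubini the Mellin transform of the superposition is `Γ(s) π⁻¹ ∫₀^π (1 - cos θ)^{-s} dθ`. The
substitution `u = (1 - cos θ) / 2` turns the last integral into `2^{-s} Β(1/2 - s, 1/2)`, where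
`Re s < 1/2` is exactly what makes it converge. Rescaling `t` to `2 t` contributes another `2^{-s}`.
-/

section MellinLaplace

open Set Function

variable {s : ℂ}

theorem hasMellin_exp_neg_mul (hs : 0 < s.re) {r : ℝ} (hr : 0 < r) :
    HasMellin (fun t : ℝ ↦ (exp (-(r * t)) : ℂ)) s ((r : ℂ) ^ (-s) * Complex.Gamma s) := by
  have hval : mellin (fun t : ℝ ↦ (exp (-(r * t)) : ℂ)) s = (r : ℂ) ^ (-s) * Complex.Gamma s := by
    rw [mellin_comp_mul_left (fun t : ℝ ↦ (exp (-t) : ℂ)) s hr, ← Complex.GammaIntegral_eq_mellin,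
      Complex.Gamma_eq_integral hs, smul_eq_mul]
  refine ⟨(MellinConvergent.comp_mul_left (f := fun t : ℝ ↦ (exp (-t) : ℂ)) hr).2 ?_, hval⟩
  simpa only [MellinConvergent, smul_eq_mul, mul_comm] using Complex.GammaIntegral_convergent hs

theorem integral_norm_cpow_mul_exp_neg_mul_Ioi (hs : 0 < s.re) {r : ℝ} (hr : 0 < r) :
    ∫ t in Ioi (0 : ℝ), ‖(t : ℂ) ^ (s - 1) * (exp (-(r * t)) : ℂ)‖ =
      Gamma s.re * ‖(r : ℂ) ^ (-s)‖ := by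
  have hnorm : ∀ t ∈ Ioi (0 : ℝ),
      ‖(t : ℂ) ^ (s - 1) * (exp (-(r * t)) : ℂ)‖ = t ^ (s.re - 1) * exp (-(r * t)) := by
    intro t ht
    rw [norm_mul, Complex.norm_cpow_eq_rpow_re_of_pos ht, Complex.norm_real, norm_eq_abs, abs_exp,
      Complex.sub_re, Complex.one_re]
  rw [setIntegral_congr_fun measurableSet_Ioi hnorm, integral_rpow_mul_exp_neg_mul_Ioi hs hr,
    Complex.norm_cpow_eq_rpow_re_of_pos hr, Complex.neg_re, rpow_neg hr.le, one_div,
    inv_rpow hr.le, mul_comm]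

variable {α : Type*} [MeasurableSpace α] {μ : Measure α} [SFinite μ] {g : α → ℝ}

theorem integrable_prod_cpow_mul_exp_neg_mul (hg : AEMeasurable g μ) (hpos : ∀ᵐ x ∂μ, 0 < g x)
    (hs : 0 < s.re) (hint : Integrable (fun x ↦ (g x : ℂ) ^ (-s)) μ) :
    Integrable (uncurry fun (t : ℝ) x ↦ (t : ℂ) ^ (s - 1) * (exp (-(g x * t)) : ℂ))
      ((volume.restrict (Ioi 0)).prod μ) := by
  have hmeas : AEStronglyMeasurable
      (uncurry fun (t : ℝ) x ↦ (t : ℂ) ^ (s - 1) * (exp (-(g x * t)) : ℂ))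
      ((volume.restrict (Ioi 0)).prod μ) := by
    have : AEMeasurable (fun p : ℝ × α ↦ g p.2) ((volume.restrict (Ioi 0)).prod μ) :=
      hg.comp_snd
    simp only [uncurry_def]
    fun_prop
  refine (integrable_prod_iff' hmeas).2 ⟨?_, (hint.norm.const_mul (Gamma s.re)).congr ?_⟩
  · filter_upwards [hpos] with x hx using (hasMellin_exp_neg_mul hs hx).1
  · filter_upwards [hpos] with x hx using (integral_norm_cpow_mul_exp_neg_mul_Ioi hs hx).symm

theorem hasMellin_integral_exp_neg_mul (hg : AEMeasurable g μ) (hpos : ∀ᵐ x ∂μ, 0 < g x)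
    (hs : 0 < s.re) (hint : Integrable (fun x ↦ (g x : ℂ) ^ (-s)) μ) :
    HasMellin (fun t ↦ ∫ x, (exp (-(g x * t)) : ℂ) ∂μ) s
      (Complex.Gamma s * ∫ x, (g x : ℂ) ^ (-s) ∂μ) := by
  have hprod := integrable_prod_cpow_mul_exp_neg_mul hg hpos hs hint
  simp only [HasMellin, MellinConvergent, mellin, smul_eq_mul, ← integral_const_mul]
  refine ⟨hprod.integral_prod_left, ?_⟩
  rw [integral_integral_swap hprod]
  refine integral_congr_ae ?_
  filter_upwards [hpos] with x hx
  rw [mul_comm, ← (hasMellin_exp_neg_mul hs hx).2]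
  rfl

end MellinLaplace

section BesselIntegral

open scoped Nat

theorem integral_cos_pow_odd (m : ℕ) : ∫ θ in (0 : ℝ)..π, cos θ ^ (2 * m + 1) = 0 := by
  induction m with
  | zero => simp
  | succ k ih =>
    rw [show 2 * (k + 1) + 1 = (2 * k + 1) + 2 by ring, integral_cos_pow, ih]
    simp

theorem integral_cos_pow_even (m : ℕ) :
    ∫ θ in (0 : ℝ)..π, cos θ ^ (2 * m) = π * (2 * m)! / (4 ^ m * m ! ^ 2) := by
  induction m with
  | zero => simp
  | succ k ih =>
    rw [show 2 * (k + 1) = 2 * k + 2 by ring, integral_cos_pow, ih]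
    simp only [sin_pi, sin_zero, Nat.factorial_succ]
    push_cast
    field_simp
    ring

theorem hasSum_integral_pow_div_factorial {α : Type*} [MeasurableSpace α] {μ : Measure α}
    [IsFiniteMeasure μ] {f : α → ℝ} {C : ℝ} (hf : AEStronglyMeasurable f μ)
    (hC : ∀ᵐ x ∂μ, ‖f x‖ ≤ C) :
    HasSum (fun n : ℕ ↦ ∫ x, f x ^ n / n ! ∂μ) (∫ x, exp (f x) ∂μ) := by
  refine hasSum_integral_of_dominated_convergence (fun n _ ↦ C ^ n / n !)
    (fun n ↦ by fun_prop) (fun n ↦ ?_) (.of_forall fun _ ↦ summable_pow_div_factorial C)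
    (integrable_const _) (.of_forall fun x ↦ ?_)
  · filter_upwards [hC] with x hx
    rw [norm_div, norm_pow, norm_natCast]
    gcongr
  · rw [exp_eq_exp_ℝ]
    exact NormedSpace.expSeries_div_hasSum_exp (f x)

theorem hasSum_integral_exp_mul_cos (z : ℝ) :
    HasSum (fun n : ℕ ↦ z ^ n / n ! * ∫ θ in (0 : ℝ)..π, cos θ ^ n)
      (∫ θ in (0 : ℝ)..π, exp (z * cos θ)) := by
  have hbound (θ : ℝ) : ‖z * cos θ‖ ≤ |z| := by
    rw [norm_mul, norm_eq_abs, norm_eq_abs]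
    exact mul_le_of_le_one_right (abs_nonneg z) (abs_cos_le_one θ)
  simp only [intervalIntegral.integral_of_le pi_pos.le, ← integral_const_mul, div_mul_eq_mul_div,
    ← mul_pow]
  exact hasSum_integral_pow_div_factorial (by fun_prop) (.of_forall hbound)

theorem integral_exp_mul_cos (z : ℝ) : ∫ θ in (0 : ℝ)..π, exp (z * cos θ) = π * besselI0 z := by
  have hseries := hasSum_integral_exp_mul_cos z
  rw [← (mul_right_injective₀ (two_ne_zero' ℕ)).hasSum_iff] at hseries
  · rw [← hseries.tsum_eq, besselI0, ← tsum_mul_left]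
    congr with m
    rw [Function.comp_apply, integral_cos_pow_even, div_pow, pow_mul 2 2 m]
    norm_num
    field_simp
  · intro n hn
    obtain ⟨m, rfl | rfl⟩ := n.even_or_odd'
    · exact absurd ⟨m, rfl⟩ hn
    · rw [integral_cos_pow_odd, mul_zero]

theorem integral_exp_neg_one_sub_cos_mul (t : ℝ) :
    ∫ θ in (0 : ℝ)..π, exp (-((1 - cos θ) * t)) = π * (exp (-t) * besselI0 t) := by
  have hsplit (θ : ℝ) : exp (-((1 - cos θ) * t)) = exp (-t) * exp (t * cos θ) := by
    rw [← exp_add]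
    ring_nf
  simp only [hsplit, intervalIntegral.integral_const_mul, integral_exp_mul_cos]
  ring

end BesselIntegral

section BetaIntegral

open Set

theorem half_sin_eq_sqrt_mul {θ : ℝ} (hθ : 0 ≤ sin θ) :
    sin θ / 2 = √((1 - cos θ) / 2 * ((1 + cos θ) / 2)) := by
  rw [eq_comm, sqrt_eq_iff_mul_self_eq (by nlinarith [sin_sq_add_cos_sq θ]) (by positivity)]
  nlinarith [sin_sq_add_cos_sq θ]

theorem sqrt_mul_mul_cpow_mul_cpow {x y : ℝ} (hx : 0 < x) (hy : 0 < y) (a b : ℂ) :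
    (√(x * y) : ℂ) * ((x : ℂ) ^ (a - 1) * (y : ℂ) ^ (b - 1)) =
      (x : ℂ) ^ (a - 1 / 2) * (y : ℂ) ^ (b - 1 / 2) := by
  have key {u : ℝ} (hu : 0 < u) (c : ℂ) :
      (√u : ℂ) * (u : ℂ) ^ (c - 1) = (u : ℂ) ^ (c - 1 / 2) := by
    rw [sqrt_eq_rpow, Complex.ofReal_cpow hu.le,
      ← Complex.cpow_add _ _ (Complex.ofReal_ne_zero.2 hu.ne')]
    push_cast
    ring_nf
  rw [sqrt_mul hx.le, Complex.ofReal_mul, mul_mul_mul_comm, key hx, key hy]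

theorem half_sin_smul_cpow_mul_cpow {θ : ℝ} (hθ : θ ∈ Ioo 0 π) (a b : ℂ) :
    (sin θ / 2) • ((((1 - cos θ) / 2 : ℝ) : ℂ) ^ (a - 1) *
      (1 - (((1 - cos θ) / 2 : ℝ) : ℂ)) ^ (b - 1)) =
      (((1 - cos θ) / 2 : ℝ) : ℂ) ^ (a - 1 / 2) * (((1 + cos θ) / 2 : ℝ) : ℂ) ^ (b - 1 / 2) := by
  have hsin := sin_pos_of_mem_Ioo hθ
  have hlo : 0 < (1 - cos θ) / 2 := by nlinarith [sin_sq_add_cos_sq θ, neg_one_le_cos θ]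
  have hhi : 0 < (1 + cos θ) / 2 := by nlinarith [sin_sq_add_cos_sq θ, cos_le_one θ]
  have hcompl : 1 - (((1 - cos θ) / 2 : ℝ) : ℂ) = (((1 + cos θ) / 2 : ℝ) : ℂ) := by
    push_cast
    ring
  rw [hcompl, half_sin_eq_sqrt_mul hsin.le, Complex.real_smul,
    sqrt_mul_mul_cpow_mul_cpow hlo hhi]

section Substitution

variable {E : Type*} [NormedAddCommGroup E] [NormedSpace ℝ E]

theorem hasDerivAt_one_sub_cos_div_two (θ : ℝ) :
    HasDerivAt (fun x ↦ (1 - cos x) / 2) (sin θ / 2) θ := by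
  simpa using ((hasDerivAt_cos θ).const_sub 1).div_const 2

theorem integral_half_sin_smul_comp (f : ℝ → E) :
    ∫ θ in (0 : ℝ)..π, (sin θ / 2) • f ((1 - cos θ) / 2) = ∫ u in (0 : ℝ)..1, f u := by
  have hsubst := intervalIntegral.integral_deriv_smul_comp_of_deriv_nonneg (a := 0) (b := π)
    (g := f) (by fun_prop) (fun θ _ ↦ hasDerivAt_one_sub_cos_div_two θ) (fun θ hθ ↦ ?_)
  · simpa using! hsubst
  · rw [min_eq_left pi_pos.le, max_eq_right pi_pos.le] at hθ
    exact (half_pos (sin_pos_of_mem_Ioo hθ)).le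

theorem intervalIntegrable_half_sin_smul_comp_iff (f : ℝ → E) :
    IntervalIntegrable (fun θ ↦ (sin θ / 2) • f ((1 - cos θ) / 2)) volume 0 π ↔
      IntervalIntegrable f volume 0 1 := by
  have hsubst := integrableOn_Icc_deriv_smul_iff_of_deriv_nonneg (g := f) (by fun_prop)
    (fun θ _ ↦ hasDerivAt_one_sub_cos_div_two θ)
    (fun θ hθ ↦ (half_pos (sin_pos_of_mem_Ioo hθ)).le) pi_pos.le
  rw [intervalIntegrable_iff_integrableOn_Icc_of_le pi_pos.le,
    intervalIntegrable_iff_integrableOn_Icc_of_le zero_le_one, hsubst]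
  norm_num

end Substitution

theorem integral_one_sub_cos_cpow_mul_one_add_cos_cpow (a b : ℂ) :
    ∫ θ in (0 : ℝ)..π,
      (((1 - cos θ) / 2 : ℝ) : ℂ) ^ (a - 1 / 2) * (((1 + cos θ) / 2 : ℝ) : ℂ) ^ (b - 1 / 2) =
      Complex.betaIntegral a b := by
  rw [Complex.betaIntegral, ← integral_half_sin_smul_comp]
  exact intervalIntegral.integral_congr_Ioo_of_le pi_pos.le
    fun θ hθ ↦ (half_sin_smul_cpow_mul_cpow hθ a b).symm

theorem intervalIntegrable_one_sub_cos_cpow_mul_one_add_cos_cpow {a b : ℂ} (ha : 0 < a.re)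
    (hb : 0 < b.re) :
    IntervalIntegrable (fun θ : ℝ ↦
      (((1 - cos θ) / 2 : ℝ) : ℂ) ^ (a - 1 / 2) * (((1 + cos θ) / 2 : ℝ) : ℂ) ^ (b - 1 / 2))
      volume 0 π := by
  refine ((intervalIntegrable_half_sin_smul_comp_iff _).2
    (Complex.betaIntegral_convergent ha hb)).congr_uIoo fun θ hθ ↦ ?_
  rw [uIoo_of_le pi_pos.le] at hθ
  exact half_sin_smul_cpow_mul_cpow hθ a b

/-- Exhibits `(1 - cos θ)^{-s}` as a trigonometric Beta integrand with parameters `1/2 - s` and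
`1/2`, the last factor being `x ^ 0 = 1`. -/
theorem one_sub_cos_cpow_neg (s : ℂ) (θ : ℝ) :
    ((1 - cos θ : ℝ) : ℂ) ^ (-s) =
      2 ^ (-s) * ((((1 - cos θ) / 2 : ℝ) : ℂ) ^ (1 / 2 - s - 1 / 2) *
        (((1 + cos θ) / 2 : ℝ) : ℂ) ^ ((1 / 2 : ℂ) - 1 / 2)) := by
  rw [show 1 - cos θ = 2 * ((1 - cos θ) / 2) by ring, Complex.ofReal_mul,
    Complex.mul_cpow_ofReal_nonneg zero_le_two (by linarith [cos_le_one θ])]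
  simp

theorem integral_one_sub_cos_cpow_neg (s : ℂ) :
    ∫ θ in (0 : ℝ)..π, ((1 - cos θ : ℝ) : ℂ) ^ (-s) =
      2 ^ (-s) * Complex.betaIntegral (1 / 2 - s) (1 / 2) := by
  simp only [one_sub_cos_cpow_neg, intervalIntegral.integral_const_mul,
    integral_one_sub_cos_cpow_mul_one_add_cos_cpow]

theorem intervalIntegrable_one_sub_cos_cpow_neg {s : ℂ} (hs : s.re < 1 / 2) :
    IntervalIntegrable (fun θ : ℝ ↦ ((1 - cos θ : ℝ) : ℂ) ^ (-s)) volume 0 π := by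
  simp only [one_sub_cos_cpow_neg]
  refine (intervalIntegrable_one_sub_cos_cpow_mul_one_add_cos_cpow ?_ ?_).const_mul _
  · simpa using hs
  · norm_num

theorem betaIntegral_one_half_sub_one_half {s : ℂ} (hs : s.re < 1 / 2) :
    Complex.betaIntegral (1 / 2 - s) (1 / 2) =
      √π * Complex.Gamma (1 / 2 - s) / Complex.Gamma (1 - s) := by
  have hsqrt : (π : ℂ) ^ (1 / 2 : ℂ) = √π := by
    rw [sqrt_eq_rpow, Complex.ofReal_cpow pi_pos.le]
    norm_num
  rw [Complex.betaIntegral_eq_Gamma_mul_div _ _ (by simpa using hs) (by norm_num),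
    Complex.Gamma_one_half_eq, hsqrt, mul_comm (Complex.Gamma _)]
  ring_nf

end BetaIntegral

theorem hasMellin_exp_neg_mul_besselI0 {s : ℂ} (h0 : 0 < s.re) (h1 : s.re < 1 / 2) :
    HasMellin (fun t ↦ ((exp (-t) * besselI0 t : ℝ) : ℂ)) s
      (Complex.Gamma s * (2 ^ (-s) * Complex.Gamma (1 / 2 - s) /
        (√π * Complex.Gamma (1 - s)))) := by
  have hpos : ∀ᵐ θ ∂volume.restrict (Set.Ioc 0 π), 0 < 1 - cos θ := by
    filter_upwards [ae_restrict_mem measurableSet_Ioc] with θ hθ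
    simpa using cos_lt_cos_of_nonneg_of_le_pi le_rfl hθ.2 hθ.1
  have hlaplace (t : ℝ) : ((exp (-t) * besselI0 t : ℝ) : ℂ) =
      (π : ℂ)⁻¹ • ∫ θ in Set.Ioc 0 π, (exp (-((1 - cos θ) * t)) : ℂ) := by
    rw [integral_complex_ofReal, ← intervalIntegral.integral_of_le pi_pos.le,
      integral_exp_neg_one_sub_cos_mul, Complex.ofReal_mul π, smul_eq_mul,
      inv_mul_cancel_left₀ (Complex.ofReal_ne_zero.2 pi_ne_zero)]
  have hmellin := hasMellin_integral_exp_neg_mul (by fun_prop) hpos h0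
    (intervalIntegrable_one_sub_cos_cpow_neg h1).1
  rw [← intervalIntegral.integral_of_le pi_pos.le, integral_one_sub_cos_cpow_neg,
    betaIntegral_one_half_sub_one_half h1] at hmellin
  simp only [hlaplace]
  convert! hasMellin_const_smul hmellin.1 (π : ℂ)⁻¹ using 1
  have hsqrt : (√π : ℂ) ≠ 0 := Complex.ofReal_ne_zero.2 (sqrt_pos.2 pi_pos).ne'
  have hpi : (π : ℂ) = √π * √π := by exact_mod_cast (mul_self_sqrt pi_pos.le).symm
  rw [hmellin.2, smul_eq_mul, hpi]
  field_simp

/-- For `0 < Re s < 1/2`, the Mellin-transform definition of the spectral zeta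
function of the graph `ℤ` agrees with the Gamma-quotient closed form:
`(1/Γ(s)) ∫₀^∞ e^{-2t} I₀(2t) t^{s-1} dt = 4^{-s} Γ(1/2 − s) / (√π Γ(1 − s))`. -/
theorem zetaZ_integral_eq_gamma_quotient (s : ℂ) (h0 : 0 < s.re) (h1 : s.re < 1 / 2) :
    (1 / Complex.Gamma s) *
        ∫ t in Set.Ioi (0 : ℝ), ((Real.exp (-2 * t) * besselI0 (2 * t) : ℝ) : ℂ) * (t : ℂ) ^ (s - 1) =
      (4 : ℂ) ^ (-s) * Complex.Gamma (1 / 2 - s) /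
        ((Real.sqrt π : ℂ) * Complex.Gamma (1 - s)) := by
  have hscale := mellin_comp_mul_left (fun t ↦ ((exp (-t) * besselI0 t : ℝ) : ℂ)) s two_pos
  have hfour : (4 : ℂ) ^ (-s) = 2 ^ (-s) * 2 ^ (-s) := by
    simpa [show (2 : ℂ) * 2 = 4 by norm_num] using
      Complex.mul_cpow_ofReal_nonneg zero_le_two zero_le_two (-s)
  rw [(hasMellin_exp_neg_mul_besselI0 h0 h1).2, mellin] at hscale
  simp only [smul_eq_mul, mul_comm (_ ^ (s - 1)), ← neg_mul] at hscale
  rw [hscale, hfour, Complex.ofReal_ofNat]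
  field_simp [Complex.Gamma_ne_zero_of_re_pos h0]
end

section
/- Let ξ_ℤ(s) = 2^s cos(πs/2) ζ_ℤ(s/2), where ζ_ℤ(s) = 4^{-s} Γ(1/2 − s) / (√π · Γ(1 − s)). Then for every complex number s at which both sides are defined (i.e., avoiding the poles of the Gamma factors, which are cancelled by zeros of the cosine factors), ξ_ℤ(s) = ξ_ℤ(1 − s); equivalently, cos(πs/2) Γ((1−s)/2) / Γ(1 − s/2) = cos(π(1−s)/2) Γ(s/2) / Γ((1+s)/2). -/
open Real

/-!
Euler's reflection formula, with one `Γ` moved to the right-hand side, says that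
`cos (π z) Γ(1/2 - z)` is `π / Γ(1/2 + z)`. Taking `z = s/2` and `z = (1 - s)/2`, both sides of the
functional equation equal `π / (Γ((1 + s)/2) Γ(1 - s/2))`.
-/

-- At a positive integer `z` both sides vanish: Mathlib sets `Γ(1 - z) = 0` there, so `π / Γ(1 - z)`
-- still agrees with the entire function `π · (1/Γ)(1 - z)`.
theorem sin_pi_mul_mul_Gamma {z : ℂ} (hz : ∀ n : ℕ, z ≠ -n) :
    Complex.sin (π * z) * Complex.Gamma z = π / Complex.Gamma (1 - z) := by
  have reflection :
      Complex.Gamma (1 - z) = π / (Complex.sin (π * z) * Complex.Gamma z) := by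
    rw [← div_div, ← Complex.Gamma_mul_Gamma_one_sub,
      mul_div_cancel_left₀ _ (Complex.Gamma_ne_zero hz)]
  rw [reflection, div_div_cancel₀ (Complex.ofReal_ne_zero.mpr pi_ne_zero)]

theorem cos_pi_mul_mul_Gamma_half_sub {z : ℂ} (hz : ∀ n : ℕ, 1 / 2 - z ≠ -n) :
    Complex.cos (π * z) * Complex.Gamma (1 / 2 - z) = π / Complex.Gamma (1 / 2 + z) := by
  have sin_eq_cos : Complex.sin (π * (1 / 2 - z)) = Complex.cos (π * z) := by
    rw [← Complex.sin_pi_div_two_sub]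
    ring_nf
  have one_sub_half_sub : 1 - (1 / 2 - z) = 1 / 2 + z := by ring
  rw [← sin_eq_cos, sin_pi_mul_mul_Gamma hz, one_sub_half_sub]

/-- Functional equation `ξ_ℤ(s) = ξ_ℤ(1 − s)` for the completed spectral zeta function
of the graph `ℤ`, in the equivalent form
`cos(πs/2) Γ((1−s)/2) / Γ(1 − s/2) = cos(π(1−s)/2) Γ(s/2) / Γ((1+s)/2)`,
valid at every `s` avoiding the poles of the four Gamma factors. -/
theorem xiZ_functional_equation (s : ℂ)
    (h1 : ∀ n : ℕ, (1 - s) / 2 ≠ -n) (h2 : ∀ n : ℕ, s / 2 ≠ -n)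
    (h3 : ∀ n : ℕ, 1 - s / 2 ≠ -n) (h4 : ∀ n : ℕ, (1 + s) / 2 ≠ -n) :
    Complex.cos (π * s / 2) * Complex.Gamma ((1 - s) / 2) / Complex.Gamma (1 - s / 2) =
      Complex.cos (π * (1 - s) / 2) * Complex.Gamma (s / 2) / Complex.Gamma ((1 + s) / 2) := by
  have left : Complex.cos (π * s / 2) * Complex.Gamma ((1 - s) / 2) =
      π / Complex.Gamma ((1 + s) / 2) := by
    rw [sub_div] at h1 ⊢
    rw [mul_div_assoc, cos_pi_mul_mul_Gamma_half_sub h1, ← add_div]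
  have right : Complex.cos (π * (1 - s) / 2) * Complex.Gamma (s / 2) =
      π / Complex.Gamma (1 - s / 2) := by
    have half_sub : s / 2 = 1 / 2 - (1 - s) / 2 := by ring
    have half_add : 1 / 2 + (1 - s) / 2 = 1 - s / 2 := by ring
    rw [half_sub] at h2
    rw [← half_add, mul_div_assoc, half_sub, cos_pi_mul_mul_Gamma_half_sub h2]
  rw [left, right, div_right_comm]
end

section
/- For every natural number n, the value of the spectral zeta function of ℤ at −n is the central binomial coefficient: 4^{n} Γ(1/2 + n) / (√π · Γ(1 + n)) = C(2n, n) = (n + 1)·Cₙ, where Cₙ = C(2n, n)/(n+1) is the n-th Catalan number; in particular ζ_ℤ(−n) is a positive integer. -/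
open Real

/-! Legendre's duplication formula at `s + 1/2` turns `4 ^ s Γ(1/2 + s) / (√π Γ(1 + s))` into
`Γ(1 + 2s) / Γ(1 + s)²`, which interpolates the central binomial coefficients
`(2n)! / (n!)²`. -/

theorem four_cpow_mul_Gamma_half_add_mul_Gamma_one_add (s : ℂ) :
    (4 : ℂ) ^ s * Complex.Gamma (1 / 2 + s) * Complex.Gamma (1 + s) =
      (√π : ℂ) * Complex.Gamma (1 + 2 * s) := by
  have duplication : Complex.Gamma (1 / 2 + s) * Complex.Gamma (1 + s) =
      Complex.Gamma (1 + 2 * s) * (2 : ℂ) ^ (-(2 * s)) * (√π : ℂ) := by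
    convert Complex.Gamma_mul_Gamma_add_half (1 / 2 + s) using 3 <;> ring_nf
  have four_cpow : (4 : ℂ) ^ s = 2 ^ (2 * s) := calc
    (4 : ℂ) ^ s = (2 ^ 2) ^ s := by norm_num
    _ = 2 ^ (2 * s) := mod_cast (Complex.natCast_cpow_natCast_mul 2 2 s).symm
  have cancel : (2 : ℂ) ^ (2 * s) * 2 ^ (-(2 * s)) = 1 := by
    rw [← Complex.cpow_add _ _ two_ne_zero, add_neg_cancel, Complex.cpow_zero]
  rw [mul_assoc, duplication, four_cpow]
  linear_combination (√π : ℂ) * Complex.Gamma (1 + 2 * s) * cancel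

theorem four_cpow_mul_Gamma_half_add_div_sqrt_pi_mul_Gamma_one_add (s : ℂ) :
    (4 : ℂ) ^ s * Complex.Gamma (1 / 2 + s) / ((√π : ℂ) * Complex.Gamma (1 + s)) =
      Complex.Gamma (1 + 2 * s) / Complex.Gamma (1 + s) ^ 2 := by
  have sqrt_pi_ne_zero : (√π : ℂ) ≠ 0 := by
    exact_mod_cast (Real.sqrt_pos.mpr Real.pi_pos).ne'
  -- At a pole of `Γ(1 + s)` both sides are `0`, since `Complex.Gamma` takes the value `0` there.
  rcases eq_or_ne (Complex.Gamma (1 + s)) 0 with pole | Gamma_ne_zero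
  · simp [pole]
  · rw [div_eq_div_iff (by positivity) (by positivity)]
    linear_combination Complex.Gamma (1 + s) *
      four_cpow_mul_Gamma_half_add_mul_Gamma_one_add s

theorem Gamma_one_add_add_div_eq_choose (m n : ℕ) :
    Complex.Gamma (1 + (m + n)) / (Complex.Gamma (1 + m) * Complex.Gamma (1 + n)) =
      (m + n).choose m := by
  have Gamma_one_add (k : ℕ) : Complex.Gamma (1 + k) = k.factorial := by
    rw [add_comm, Complex.Gamma_nat_eq_factorial]
  rw [← Nat.cast_add, Gamma_one_add, Gamma_one_add, Gamma_one_add, Nat.cast_add_choose]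

/-- The value of the spectral zeta function of the graph `ℤ` at `−n` is the central
binomial coefficient: `4^n Γ(1/2 + n) / (√π Γ(1 + n)) = C(2n, n) = (n+1)·Cₙ`, where
`Cₙ` is the `n`-th Catalan number; in particular it is a positive integer. -/
theorem zetaZ_neg_nat (n : ℕ) :
    (4 : ℂ) ^ (n : ℂ) * Complex.Gamma (1 / 2 + n) /
        ((Real.sqrt π : ℂ) * Complex.Gamma (1 + n)) =
      (Nat.choose (2 * n) n : ℂ) ∧
    Nat.choose (2 * n) n = (n + 1) * catalan n ∧
    0 < Nat.choose (2 * n) n := by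
  rw [← Nat.centralBinom_eq_two_mul_choose]
  refine ⟨?_, (succ_mul_catalan_eq_centralBinom n).symm, n.centralBinom_pos⟩
  rw [four_cpow_mul_Gamma_half_add_div_sqrt_pi_mul_Gamma_one_add, sq, two_mul,
    Gamma_one_add_add_div_eq_choose, ← two_mul, Nat.centralBinom_eq_two_mul_choose]
end

section
/- For every complex number s with 0 < Re(s) < 1/2, ∫₀¹ (2 sin(πx))^{-2s} dx = 4^{-s} Γ(1/2 − s) / (√π · Γ(1 − s)); that is, the spectral-measure integral representation of ζ_ℤ(s) agrees with its Gamma-quotient closed form. -/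
open Real

/-!
Pulling out the constant `2 ^ (-2s) = 4 ^ (-s)` and rescaling leaves `π⁻¹ ∫₀^π sin θ ^ w dθ` with
`w = -2s`. As `sin 2φ = 2 sin φ cos φ`, this integral is `2 ^ w` times a diagonal Beta value
`B(u, u)` with `2u = w + 1`, and Legendre's duplication formula turns `B(u, u)` into
`2 ^ (1 - 2u) √π Γ(u) / Γ(u + 1/2)`, in which the power of two cancels `2 ^ w`.
-/

theorem ofReal_mul_sq_cpow_sub_one {x : ℝ} (hx : 0 < x) (u : ℂ) :
    (x : ℂ) * ((x : ℂ) ^ 2) ^ (u - 1) = (x : ℂ) ^ (2 * u - 1) := by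
  have hx₀ : (x : ℂ) ≠ 0 := by exact_mod_cast hx.ne'
  have harg : (x : ℂ).arg = 0 := Complex.arg_ofReal_of_nonneg hx.le
  rw [show 2 * u - 1 = 2 * (u - 1) + 1 by ring, Complex.cpow_add _ _ hx₀, Complex.cpow_one,
    Complex.cpow_ofNat_mul' (by simp [harg, pi_pos]) (by simp [harg, pi_pos.le]), mul_comm]

theorem sin_pos_and_cos_pos_of_mem_Ioo {φ : ℝ} (hφ : φ ∈ Set.Ioo 0 (π / 2)) :
    0 < sin φ ∧ 0 < cos φ :=
  ⟨sin_pos_of_pos_of_lt_pi hφ.1 (by linarith [hφ.2, pi_pos]),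
    cos_pos_of_mem_Ioo ⟨by linarith [hφ.1, pi_pos], hφ.2⟩⟩

theorem betaIntegral_eq_two_mul_integral_sin_cpow_mul_cos_cpow (u v : ℂ) :
    Complex.betaIntegral u v =
      2 * ∫ φ in (0 : ℝ)..π / 2, (sin φ : ℂ) ^ (2 * u - 1) * (cos φ : ℂ) ^ (2 * v - 1) := by
  let g : ℝ → ℂ := fun t ↦ (t : ℂ) ^ (u - 1) * (1 - (t : ℂ)) ^ (v - 1)
  have hpos : ∀ φ ∈ Set.Ioo (min 0 (π / 2)) (max 0 (π / 2)), 0 ≤ 2 * sin φ * cos φ := by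
    intro φ hφ
    rw [min_eq_left pi_div_two_pos.le, max_eq_right pi_div_two_pos.le] at hφ
    obtain ⟨hsin, hcos⟩ := sin_pos_and_cos_pos_of_mem_Ioo hφ
    positivity
  have hsubst : ∫ φ in (0 : ℝ)..π / 2, (2 * sin φ * cos φ) • g (sin φ ^ 2) =
      Complex.betaIntegral u v := by
    have h := intervalIntegral.integral_deriv_smul_comp_of_deriv_nonneg (g := g)
      (f := fun φ ↦ sin φ ^ 2) (f' := fun φ ↦ 2 * sin φ * cos φ) (by fun_prop)
      (fun φ _ ↦ by simpa using (hasDerivAt_sin φ).fun_pow 2) hpos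
    rwa [sin_zero, sin_pi_div_two, one_pow, zero_pow two_ne_zero] at h
  rw [← hsubst, ← intervalIntegral.integral_const_mul]
  refine intervalIntegral.integral_congr_Ioo_of_le pi_div_two_pos.le fun φ hφ ↦ ?_
  obtain ⟨hsin, hcos⟩ := sin_pos_and_cos_pos_of_mem_Ioo hφ
  have hcos_sq : 1 - (sin φ : ℂ) ^ 2 = (cos φ : ℂ) ^ 2 := by
    exact_mod_cast (cos_sq' φ).symm
  simp only [g, Complex.real_smul, Complex.ofReal_mul, Complex.ofReal_ofNat, Complex.ofReal_pow,
    hcos_sq, ← ofReal_mul_sq_cpow_sub_one hsin, ← ofReal_mul_sq_cpow_sub_one hcos]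
  ring

theorem integral_sin_cpow_eq_betaIntegral (w : ℂ) :
    ∫ θ in (0 : ℝ)..π, (sin θ : ℂ) ^ w =
      2 ^ w * Complex.betaIntegral ((w + 1) / 2) ((w + 1) / 2) := by
  have hexp : 2 * ((w + 1) / 2) - 1 = w := by ring
  have hscale : ∫ θ in (0 : ℝ)..π, (sin θ : ℂ) ^ w =
      2 * ∫ φ in (0 : ℝ)..π / 2, (sin (2 * φ) : ℂ) ^ w := by
    rw [intervalIntegral.integral_comp_mul_left (fun θ : ℝ ↦ (sin θ : ℂ) ^ w) two_ne_zero,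
      mul_zero, mul_div_cancel₀ π two_ne_zero, Complex.real_smul]
    push_cast
    ring
  have hdouble : Set.EqOn (fun φ : ℝ ↦ (sin (2 * φ) : ℂ) ^ w)
      (fun φ : ℝ ↦ 2 ^ w * ((sin φ : ℂ) ^ w * (cos φ : ℂ) ^ w)) (Set.Ioo 0 (π / 2)) := by
    intro φ hφ
    obtain ⟨hsin, hcos⟩ := sin_pos_and_cos_pos_of_mem_Ioo hφ
    simp only [sin_two_mul, mul_assoc, Complex.ofReal_mul 2]
    rw [Complex.mul_cpow_ofReal_nonneg zero_le_two (by positivity), Complex.ofReal_mul,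
      Complex.mul_cpow_ofReal_nonneg hsin.le hcos.le, Complex.ofReal_ofNat]
  rw [hscale, betaIntegral_eq_two_mul_integral_sin_cpow_mul_cos_cpow, hexp,
    intervalIntegral.integral_congr_Ioo_of_le pi_div_two_pos.le hdouble,
    intervalIntegral.integral_const_mul]
  ring

theorem betaIntegral_self {u : ℂ} (hu : 0 < u.re) :
    Complex.betaIntegral u u =
      2 ^ (1 - 2 * u) * √π * Complex.Gamma u / Complex.Gamma (u + 1 / 2) := by
  have hΓ_double : Complex.Gamma (u + u) ≠ 0 := Complex.Gamma_ne_zero_of_re_pos (by simp [hu])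
  have hΓ_half : Complex.Gamma (u + 1 / 2) ≠ 0 :=
    Complex.Gamma_ne_zero_of_re_pos (by simpa using add_pos hu one_half_pos)
  have hdup := Complex.Gamma_mul_Gamma_add_half u
  rw [two_mul] at hdup ⊢
  rw [Complex.betaIntegral_eq_Gamma_mul_div u u hu hu, div_eq_div_iff hΓ_double hΓ_half]
  linear_combination Complex.Gamma u * hdup

theorem integral_sin_cpow {w : ℂ} (hw : -1 < w.re) :
    ∫ θ in (0 : ℝ)..π, (sin θ : ℂ) ^ w =
      √π * Complex.Gamma ((w + 1) / 2) / Complex.Gamma (w / 2 + 1) := by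
  have hre : 0 < ((w + 1) / 2).re := by simp; linarith
  have hpow : (2 : ℂ) ^ w * 2 ^ (1 - 2 * ((w + 1) / 2)) = 1 := by
    rw [← Complex.cpow_add _ _ two_ne_zero]
    ring_nf
    exact Complex.cpow_zero 2
  rw [integral_sin_cpow_eq_betaIntegral, betaIntegral_self hre,
    show (w + 1) / 2 + 1 / 2 = w / 2 + 1 by ring]
  linear_combination √π * Complex.Gamma ((w + 1) / 2) / Complex.Gamma (w / 2 + 1) * hpow

theorem integral_const_mul_sin_pi_mul_cpow {c : ℝ} (hc : 0 ≤ c) (w : ℂ) :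
    ∫ x in (0 : ℝ)..1, ((c * sin (π * x) : ℝ) : ℂ) ^ w =
      (c : ℂ) ^ w * ((π : ℂ)⁻¹ * ∫ θ in (0 : ℝ)..π, (sin θ : ℂ) ^ w) := by
  have hscale : ∫ x in (0 : ℝ)..1, ((c * sin (π * x) : ℝ) : ℂ) ^ w =
      (π : ℂ)⁻¹ * ∫ θ in (0 : ℝ)..π, ((c * sin θ : ℝ) : ℂ) ^ w := by
    rw [intervalIntegral.integral_comp_mul_left (fun θ : ℝ ↦ ((c * sin θ : ℝ) : ℂ) ^ w) pi_ne_zero,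
      mul_zero, mul_one, Complex.real_smul, Complex.ofReal_inv]
  have hfactor : Set.EqOn (fun θ : ℝ ↦ ((c * sin θ : ℝ) : ℂ) ^ w)
      (fun θ : ℝ ↦ (c : ℂ) ^ w * (sin θ : ℂ) ^ w) (Set.Ioo 0 π) := by
    intro θ hθ
    simp only [Complex.ofReal_mul]
    exact Complex.mul_cpow_ofReal_nonneg hc (sin_pos_of_mem_Ioo hθ).le w
  rw [hscale, intervalIntegral.integral_congr_Ioo_of_le pi_pos.le hfactor,
    intervalIntegral.integral_const_mul, mul_left_comm]

theorem zetaZ_spectral_measure_integral_general (s : ℂ) (hs : s.re < 1 / 2) :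
    ∫ x in (0 : ℝ)..1, ((2 * Real.sin (π * x) : ℝ) : ℂ) ^ (-(2 * s)) =
      (4 : ℂ) ^ (-s) * Complex.Gamma (1 / 2 - s) /
        ((Real.sqrt π : ℂ) * Complex.Gamma (1 - s)) := by
  have hre : -1 < (-(2 * s)).re := by simp; linarith
  have hfour : (2 : ℂ) ^ (-(2 * s)) = 4 ^ (-s) := by
    rw [← mul_neg, ← Nat.cast_ofNat, Complex.natCast_cpow_natCast_mul]
    norm_num
  have hpi : (π : ℂ)⁻¹ * √π = (√π : ℂ)⁻¹ := by
    exact_mod_cast (inv_mul_eq_div π √π).trans sqrt_div_self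
  rw [integral_const_mul_sin_pi_mul_cpow zero_le_two, integral_sin_cpow hre,
    Complex.ofReal_ofNat, hfour, show (-(2 * s) + 1) / 2 = 1 / 2 - s by ring,
    show -(2 * s) / 2 + 1 = 1 - s by ring]
  linear_combination 4 ^ (-s) * Complex.Gamma (1 / 2 - s) / Complex.Gamma (1 - s) * hpi

/-- Spectral-measure integral representation of the spectral zeta function of the
graph `ℤ`: for `0 < Re s < 1/2`,
`∫₀¹ (2 sin(πx))^{-2s} dx = 4^{-s} Γ(1/2 − s) / (√π Γ(1 − s))`. -/
theorem zetaZ_spectral_measure_integral (s : ℂ) (h0 : 0 < s.re) (h1 : s.re < 1 / 2) :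
    ∫ x in (0 : ℝ)..1, ((2 * Real.sin (π * x) : ℝ) : ℂ) ^ (-(2 * s)) =
      (4 : ℂ) ^ (-s) * Complex.Gamma (1 / 2 - s) /
        ((Real.sqrt π : ℂ) * Complex.Gamma (1 - s)) :=
  zetaZ_spectral_measure_integral_general s h1
end

section
/- (1/(4π²)) ∫₀^{2π} ∫₀^{2π} log(4 − 2 cos x − 2 cos y) dx dy = (4/π) G, where G = Σ_{n=0}^∞ (−1)ⁿ/(2n+1)² is Catalan's constant; that is, the logarithm of the Fuglede–Kadison determinant of the Laplacian of the graph ℤ² equals (4/π) times Catalan's constant. -/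
open MeasureTheory Real

/-- Catalan's constant `G = Σ_{n=0}^∞ (−1)ⁿ/(2n+1)²`. -/
noncomputable def catalanConstant : ℝ :=
  ∑' n : ℕ, (-1) ^ n / (2 * (n : ℝ) + 1) ^ 2

/-!
Jensen's formula for `z ↦ z - eᵘ` on the unit circle evaluates one of the two integrals:
`∫ log (2 cosh u - 2 cos y) dy = 2π|u|` over a period. Since `4 - 2 cos x = 2 cosh u` for
`u = 2 arsinh (sin (x / 2))`, what is left is the integral of `arsinh (sin t)` over `[0, π]`.
Writing `arsinh (a sin t)` as the integral of its derivative in `a` and exchanging the integrals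
turns it into `2 ∫₀¹ arctan k / k dk`, and the arctangent series integrates termwise to Catalan's
series. If the two directions of the lattice carry conductances `a²` and `1`, the same argument
gives the inverse tangent integral `Ti₂ |a|` in place of Catalan's constant.
-/

/-- The inverse tangent integral `Ti₂ x = ∫₀ˣ arctan k / k dk`. Here the integrand has the value `0`
at `k = 0` rather than its limit `1`. -/
noncomputable def inverseTangentIntegral (x : ℝ) : ℝ :=
  ∫ k in (0 : ℝ)..x, arctan k / k

lemma inverseTangentIntegral_eq_integral_zero_one (x : ℝ) :
    inverseTangentIntegral x = ∫ u in (0 : ℝ)..1, arctan (x * u) / u := by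
  rcases eq_or_ne x 0 with rfl | hx
  · simp [inverseTangentIntegral]
  · have scale := intervalIntegral.mul_integral_comp_mul_left (f := fun k => arctan k / k)
      (a := 0) (b := 1) x
    rw [mul_zero, mul_one, ← intervalIntegral.integral_const_mul] at scale
    rw [inverseTangentIntegral, ← scale]
    congr 1 with u
    field_simp

lemma summable_one_div_two_mul_add_one_sq :
    Summable fun n : ℕ => 1 / (2 * (n : ℝ) + 1) ^ 2 := by
  have odd_injective : Function.Injective fun n : ℕ => 2 * n + 1 := fun m n h => by simpa using h
  refine ((summable_one_div_nat_pow.2 one_lt_two).comp_injective odd_injective).congr fun n => ?_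
  simp

lemma integral_Ioo_zero_one_pow (n : ℕ) :
    ∫ u in Set.Ioo (0 : ℝ) 1, u ^ n = 1 / (n + 1) := by
  rw [← integral_Ioc_eq_integral_Ioo, ← intervalIntegral.integral_of_le zero_le_one, integral_pow]
  simp

lemma hasSum_integral_zero_one_of_hasSum_pow_smul {ι E : Type*} [Countable ι]
    [NormedAddCommGroup E] [NormedSpace ℝ E] [CompleteSpace E] {c : ι → E} {m : ι → ℕ} {f : ℝ → E}
    (hc : Summable fun i => ‖c i‖ / (m i + 1))
    (hf : ∀ u ∈ Set.Ioo (0 : ℝ) 1, HasSum (fun i => u ^ m i • c i) (f u)) :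
    HasSum (fun i => (1 / (m i + 1) : ℝ) • c i) (∫ u in (0 : ℝ)..1, f u) := by
  have integrable_term (i : ι) :
      IntegrableOn (fun u : ℝ => u ^ m i • c i) (Set.Ioo 0 1) :=
    (Continuous.integrableOn_Icc (by fun_prop)).mono_set Set.Ioo_subset_Icc_self
  have integral_norm_term (i : ι) :
      ∫ u in Set.Ioo (0 : ℝ) 1, ‖u ^ m i • c i‖ = ‖c i‖ / (m i + 1) := by
    rw [← one_div_mul_eq_div, ← integral_Ioo_zero_one_pow, ← integral_mul_const]
    refine setIntegral_congr_fun measurableSet_Ioo fun u hu => ?_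
    rw [norm_smul, norm_of_nonneg (pow_nonneg hu.1.le _)]
  have termwise := hasSum_integral_of_summable_integral_norm integrable_term
    (by simpa only [integral_norm_term] using hc)
  simp_rw [integral_smul_const, integral_Ioo_zero_one_pow] at termwise
  rwa [setIntegral_congr_fun measurableSet_Ioo fun u hu => (hf u hu).tsum_eq,
    ← integral_Ioc_eq_integral_Ioo, ← intervalIntegral.integral_of_le zero_le_one] at termwise

lemma hasSum_arctan_mul_div {x u : ℝ} (hx : |x| ≤ 1) (hu : u ∈ Set.Ioo 0 1) :
    HasSum (fun n : ℕ => u ^ (2 * n) • ((-1) ^ n * x ^ (2 * n + 1) / (2 * n + 1)))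
      (arctan (x * u) / u) := by
  have hxu : ‖x * u‖ < 1 := by
    rw [norm_mul, norm_of_nonneg hu.1.le]
    exact mul_lt_one_of_nonneg_of_lt_one_right hx hu.1.le hu.2
  have hu0 : u ≠ 0 := hu.1.ne'
  refine ((hasSum_arctan hxu).div_const u).congr_fun fun n => ?_
  push_cast
  rw [smul_eq_mul]
  field_simp
  ring

theorem hasSum_inverseTangentIntegral {x : ℝ} (hx : |x| ≤ 1) :
    HasSum (fun n : ℕ => (-1) ^ n * x ^ (2 * n + 1) / (2 * n + 1) ^ 2)
      (inverseTangentIntegral x) := by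
  have norm_coeff_le (n : ℕ) :
      ‖(-1) ^ n * x ^ (2 * n + 1) / (2 * n + 1)‖ ≤ 1 / (2 * (n : ℝ) + 1) := by
    rw [norm_div, norm_mul, norm_pow, norm_pow, norm_neg, norm_one, one_pow, one_mul,
      norm_of_nonneg (by positivity : (0 : ℝ) ≤ 2 * n + 1)]
    gcongr
    exact pow_le_one₀ (norm_nonneg x) hx
  have summable_norm : Summable fun n : ℕ =>
      ‖(-1) ^ n * x ^ (2 * n + 1) / (2 * n + 1)‖ / ((2 * n : ℕ) + 1) := by
    refine summable_one_div_two_mul_add_one_sq.of_nonneg_of_le (fun n => by positivity) fun n => ?_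
    rw [sq, ← div_div, Nat.cast_mul, Nat.cast_ofNat]
    gcongr
    exact norm_coeff_le n
  rw [inverseTangentIntegral_eq_integral_zero_one]
  refine (hasSum_integral_zero_one_of_hasSum_pow_smul summable_norm
    fun u hu => hasSum_arctan_mul_div hx hu).congr_fun fun n => ?_
  rw [smul_eq_mul, Nat.cast_mul, Nat.cast_ofNat]
  field_simp

lemma inverseTangentIntegral_one : inverseTangentIntegral 1 = catalanConstant := by
  simpa [catalanConstant] using (hasSum_inverseTangentIntegral (x := 1) (by simp)).tsum_eq.symm

lemma continuous_sin_div_sqrt_one_add :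
    Continuous fun p : ℝ × ℝ => sin p.1 / √(1 + p.2 ^ 2 * sin p.1 ^ 2) :=
  Continuous.div (by fun_prop) (by fun_prop) fun _ => by positivity

lemma integral_sin_div_sqrt_one_add_eq_arsinh (a t : ℝ) :
    ∫ k in (0 : ℝ)..a, sin t / √(1 + k ^ 2 * sin t ^ 2) = arsinh (a * sin t) := by
  have deriv_arsinh (k : ℝ) :
      HasDerivAt (fun k => arsinh (k * sin t)) (sin t / √(1 + k ^ 2 * sin t ^ 2)) k := by
    refine (hasDerivAt_mul_const (sin t)).arsinh.congr_deriv ?_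
    rw [mul_pow, smul_eq_mul, inv_mul_eq_div]
  rw [intervalIntegral.integral_eq_sub_of_hasDerivAt (fun k _ => deriv_arsinh k)
    ((continuous_sin_div_sqrt_one_add.comp (.prodMk_right t)).intervalIntegrable _ _)]
  simp

lemma hasDerivAt_arctan_mul_cos_div_sqrt (k t : ℝ) :
    HasDerivAt (fun t => arctan (k * cos t / √(1 + k ^ 2 * sin t ^ 2)))
      (-(k * (sin t / √(1 + k ^ 2 * sin t ^ 2)))) t := by
  have radicand_pos : 0 < 1 + k ^ 2 * sin t ^ 2 := by positivity
  set w := √(1 + k ^ 2 * sin t ^ 2)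
  have w_pos : 0 < w := sqrt_pos.2 radicand_pos
  have deriv_w : HasDerivAt (fun t => √(1 + k ^ 2 * sin t ^ 2)) (k ^ 2 * sin t * cos t / w) t := by
    refine ((((hasDerivAt_sin t).fun_pow 2).const_mul (k ^ 2)).const_add 1 |>.sqrt
      radicand_pos.ne').congr_deriv ?_
    push_cast
    field_simp
    ring
  refine (((hasDerivAt_cos t).const_mul k).fun_div deriv_w w_pos.ne').arctan.congr_deriv ?_
  change 1 / (1 + (k * cos t / w) ^ 2) * ((k * -sin t * w - k * cos t *
      (k ^ 2 * sin t * cos t / w)) / w ^ 2) = _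
  field_simp
  ring

lemma integral_sin_div_sqrt_one_add_eq_arctan {k : ℝ} (hk : k ≠ 0) :
    ∫ t in (0 : ℝ)..π, sin t / √(1 + k ^ 2 * sin t ^ 2) = 2 * (arctan k / k) := by
  have integral_mul :
      ∫ t in (0 : ℝ)..π, -(k * (sin t / √(1 + k ^ 2 * sin t ^ 2))) = -(2 * arctan k) := by
    rw [intervalIntegral.integral_eq_sub_of_hasDerivAt
      (fun t _ => hasDerivAt_arctan_mul_cos_div_sqrt k t)
      (((continuous_sin_div_sqrt_one_add.comp (.prodMk_left k)).const_mul k).neg.intervalIntegrable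
        _ _)]
    simp only [cos_pi, sin_pi, cos_zero, sin_zero, zero_pow two_ne_zero, mul_zero, add_zero,
      sqrt_one, div_one, mul_neg, mul_one, arctan_neg]
    ring
  rw [intervalIntegral.integral_neg, intervalIntegral.integral_const_mul, neg_inj] at integral_mul
  rw [← mul_div_assoc, ← integral_mul, mul_div_cancel_left₀ _ hk]

theorem integral_arsinh_mul_sin (a : ℝ) :
    ∫ t in (0 : ℝ)..π, arsinh (a * sin t) = 2 * inverseTangentIntegral a := by
  calc ∫ t in (0 : ℝ)..π, arsinh (a * sin t)
      = ∫ t in (0 : ℝ)..π, ∫ k in (0 : ℝ)..a, sin t / √(1 + k ^ 2 * sin t ^ 2) := by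
        simp_rw [integral_sin_div_sqrt_one_add_eq_arsinh]
    _ = ∫ k in (0 : ℝ)..a, ∫ t in (0 : ℝ)..π, sin t / √(1 + k ^ 2 * sin t ^ 2) := by
        refine intervalIntegral_intervalIntegral_swap ?_
        exact (continuous_sin_div_sqrt_one_add.continuousOn.integrableOn_compact
          (isCompact_uIcc.prod isCompact_uIcc)).mono_set
          (Set.prod_mono Set.uIoc_subset_uIcc Set.uIoc_subset_uIcc)
    _ = ∫ k in (0 : ℝ)..a, 2 * (arctan k / k) := by
        refine intervalIntegral.integral_congr_ae ?_
        filter_upwards [Measure.ae_ne volume 0] with k hk _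
        exact integral_sin_div_sqrt_one_add_eq_arctan hk
    _ = 2 * inverseTangentIntegral a := intervalIntegral.integral_const_mul _ _

lemma norm_circleMap_sub_ofReal_sq (r y : ℝ) :
    ‖circleMap 0 1 y - r‖ ^ 2 = 1 - 2 * r * cos y + r ^ 2 := by
  rw [← Complex.normSq_eq_norm_sq, Complex.normSq_apply]
  simp only [Complex.sub_re, Complex.sub_im, circleMap_zero_re, circleMap_zero_im,
    Complex.ofReal_re, Complex.ofReal_im, one_mul, sub_zero]
  linear_combination sin_sq_add_cos_sq y

lemma log_one_sub_two_mul_cos_add_sq (r y : ℝ) :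
    log (1 - 2 * r * cos y + r ^ 2) = 2 * log ‖circleMap 0 1 y - r‖ := by
  rw [← norm_circleMap_sub_ofReal_sq, log_pow, Nat.cast_ofNat]

lemma intervalIntegrable_log_one_sub_two_mul_cos_add_sq (r : ℝ) :
    IntervalIntegrable (fun y => log (1 - 2 * r * cos y + r ^ 2)) volume 0 (2 * π) := by
  simp_rw [log_one_sub_two_mul_cos_add_sq]
  exact ((circleIntegrable_def _ _ _).1 (circleIntegrable_log_norm_sub_const 1)).const_mul 2

theorem integral_log_one_sub_two_mul_cos_add_sq (r : ℝ) :
    ∫ y in (0 : ℝ)..2 * π, log (1 - 2 * r * cos y + r ^ 2) = 4 * π * log⁺ r := by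
  have jensen := circleAverage_log_norm_sub_const_eq_posLog (a := (r : ℂ))
  rw [circleAverage_def, smul_eq_mul, Complex.norm_real, Real.norm_eq_abs, posLog_abs,
    inv_mul_eq_iff_eq_mul₀ two_pi_pos.ne'] at jensen
  simp_rw [log_one_sub_two_mul_cos_add_sq]
  rw [intervalIntegral.integral_const_mul, jensen]
  ring

lemma log_two_mul_cosh_sub_two_mul_cos (u y : ℝ) :
    log (2 * cosh u - 2 * cos y) = log (1 - 2 * exp u * cos y + exp u ^ 2) - u := by
  have factor : 1 - 2 * exp u * cos y + exp u ^ 2 = exp u * (2 * cosh u - 2 * cos y) := by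
    have exp_mul_exp_neg : exp u * exp (-u) = 1 := by rw [← exp_add, add_neg_cancel, exp_zero]
    rw [cosh_eq]
    linear_combination -exp_mul_exp_neg
  rcases eq_or_ne (2 * cosh u - 2 * cos y) 0 with h | h
  · -- The argument vanishes only for `u = 0`, where the junk value `log 0 = 0` is consistent.
    have hu : u = 0 := not_ne_iff.1 fun hu => by linarith [one_lt_cosh.2 hu, cos_le_one y]
    rw [factor, h, hu, mul_zero, sub_zero]
  · rw [factor, log_mul (exp_ne_zero u) h, log_exp, add_sub_cancel_left]

theorem integral_log_two_mul_cosh_sub_two_mul_cos (u : ℝ) :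
    ∫ y in (0 : ℝ)..2 * π, log (2 * cosh u - 2 * cos y) = 2 * π * |u| := by
  simp_rw [log_two_mul_cosh_sub_two_mul_cos]
  rw [intervalIntegral.integral_sub (intervalIntegrable_log_one_sub_two_mul_cos_add_sq _)
      intervalIntegrable_const, integral_log_one_sub_two_mul_cos_add_sq,
    intervalIntegral.integral_const, ← half_mul_log_add_log_abs, log_exp, smul_eq_mul]
  ring

lemma two_mul_cosh_two_mul_arsinh_mul_sin_half (a x : ℝ) :
    2 * cosh (2 * arsinh (a * sin (x / 2))) = a ^ 2 * (2 - 2 * cos x) + 2 := by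
  have cos_eq : cos x = 1 - 2 * sin (x / 2) ^ 2 := by
    rw [← cos_two_mul_eq_one_sub, mul_div_cancel₀ x two_ne_zero]
  rw [cosh_two_mul, cosh_sq', sinh_arsinh, cos_eq]
  ring

lemma integral_log_mul_two_sub_cos_add_two_sub_cos (a x : ℝ) :
    ∫ y in (0 : ℝ)..2 * π, log (a ^ 2 * (2 - 2 * cos x) + (2 - 2 * cos y)) =
      4 * π * |arsinh (a * sin (x / 2))| := by
  simp_rw [← add_sub_assoc, ← two_mul_cosh_two_mul_arsinh_mul_sin_half]
  rw [integral_log_two_mul_cosh_sub_two_mul_cos, abs_mul, abs_two]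
  ring

lemma abs_arsinh (x : ℝ) : |arsinh x| = arsinh |x| := by
  rcases le_total 0 x with hx | hx
  · rw [abs_of_nonneg hx, abs_of_nonneg (arsinh_nonneg_iff.2 hx)]
  · rw [abs_of_nonpos hx, abs_of_nonpos (arsinh_nonpos_iff.2 hx), arsinh_neg]

lemma integral_abs_arsinh_mul_sin_half (a : ℝ) :
    ∫ x in (0 : ℝ)..2 * π, |arsinh (a * sin (x / 2))| = 4 * inverseTangentIntegral |a| := by
  have abs_arsinh_mul_sin {t : ℝ} (ht : t ∈ Set.uIcc 0 π) :
      |arsinh (a * sin t)| = arsinh (|a| * sin t) := by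
    rw [Set.uIcc_of_le pi_pos.le] at ht
    have sin_nonneg : 0 ≤ sin t := sin_nonneg_of_mem_Icc ht
    rw [abs_arsinh, abs_mul, abs_of_nonneg sin_nonneg]
  rw [intervalIntegral.integral_comp_div (fun t => |arsinh (a * sin t)|) two_ne_zero, zero_div,
    mul_div_cancel_left₀ π two_ne_zero,
    intervalIntegral.integral_congr fun t ht => abs_arsinh_mul_sin ht,
    integral_arsinh_mul_sin, smul_eq_mul]
  ring

theorem logDet_Z2_eq_catalan_general (a : ℝ) :
    (1 / (4 * π ^ 2)) *
        ∫ x in (0 : ℝ)..(2 * π), ∫ y in (0 : ℝ)..(2 * π),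
          log (a ^ 2 * (2 - 2 * cos x) + (2 - 2 * cos y)) =
      (4 / π) * inverseTangentIntegral |a| := by
  simp_rw [integral_log_mul_two_sub_cos_add_two_sub_cos]
  rw [intervalIntegral.integral_const_mul, integral_abs_arsinh_mul_sin_half]
  field_simp

/-- The logarithm of the Fuglede–Kadison determinant of the Laplacian of the
lattice graph `ℤ²` equals `(4/π)` times Catalan's constant:
`(1/4π²) ∫₀^{2π} ∫₀^{2π} log(4 − 2cos x − 2cos y) dx dy = (4/π) G`. -/
theorem logDet_Z2_eq_catalan :
    (1 / (4 * π ^ 2)) *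
        ∫ x in (0 : ℝ)..(2 * π), ∫ y in (0 : ℝ)..(2 * π),
          Real.log (4 - 2 * Real.cos x - 2 * Real.cos y) =
      (4 / π) * catalanConstant := by
  have symbol_eq (x y : ℝ) :
      4 - 2 * cos x - 2 * cos y = 1 ^ 2 * (2 - 2 * cos x) + (2 - 2 * cos y) := by ring
  simp_rw [symbol_eq]
  rw [logDet_Z2_eq_catalan_general, abs_one, inverseTangentIntegral_one]
end

section
/- Let p be a prime. For every x ∈ ℚ_p with x ≠ 0 and every t > 0, Σ_{k=−∞}^{∞} (e^{-t p^{2k}} − e^{-t p^{2k+2}}) p^k 𝟙[|x|_p ≤ p^{-k}] = Σ_{m=0}^∞ ((−1)^m t^m / m!) · ((1 − p^{2m})/(1 − p^{-2m-1})) · |x|_p^{-2m-1}; that is, the two expressions for the heat kernel K_p(x, t) of the Taibleson–Vladimirov Laplacian on ℚ_p agree for x ≠ 0. -/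
open Real

/- If `f z = ∑_m c_m z ^ m` for `|z| ≤ |s|`, and `|q| < 1`, `|μ| ≤ 1`, then expanding `f` in
`∑_j f (s μ ^ j) q ^ j` and summing over `j` first leaves a geometric series in each degree, so that
the sum equals `∑_m c_m s ^ m / (1 - q μ ^ m)`. For `|x|_p = p ^ (-n)` only the scales `k = n - j`,
`j ≥ 0`, contribute to the heat kernel, and the identity is the case `f z = exp z - exp (p² z)`,
`q = p⁻¹`, `μ = p⁻²`, `s = -t p ^ (2n)`, multiplied by `p ^ n`. -/

theorem exists_hasSum_of_hasSum_mul_pow {ι 𝕜 : Type*} [NormedField 𝕜] [CompleteSpace 𝕜]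
    {c r : ι → 𝕜} {g : ℕ → 𝕜} {ρ : ℝ} (hρ₀ : 0 ≤ ρ) (hρ₁ : ρ < 1)
    (hc : Summable fun i => ‖c i‖) (hr : ∀ i, ‖r i‖ ≤ ρ)
    (hg : ∀ j, HasSum (fun i => c i * r i ^ j) (g j)) :
    ∃ S, HasSum g S ∧ HasSum (fun i => c i / (1 - r i)) S := by
  have hbound : Summable fun z : ι × ℕ => ‖c z.1‖ * ρ ^ z.2 :=
    hc.mul_of_nonneg (summable_geometric_of_lt_one hρ₀ hρ₁) (fun _ => norm_nonneg _)
      (fun _ => pow_nonneg hρ₀ _)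
  have hsum : Summable fun z : ι × ℕ => c z.1 * r z.1 ^ z.2 := by
    refine hbound.of_norm_bounded fun z => ?_
    rw [norm_mul, norm_pow]
    gcongr
    exact hr z.1
  obtain ⟨S, hS⟩ := hsum
  have hgeom (i : ι) : HasSum (fun j => c i * r i ^ j) (c i / (1 - r i)) := by
    rw [div_eq_mul_inv]
    exact (hasSum_geometric_of_norm_lt_one ((hr i).trans_lt hρ₁)).mul_left (c i)
  exact ⟨S, ((Equiv.prodComm ℕ ι).hasSum_iff.mpr hS).prod_fiberwise hg,
    hS.prod_fiberwise hgeom⟩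

theorem exists_hasSum_dilation_mul_pow {𝕜 : Type*} [RCLike 𝕜] {f : 𝕜 → 𝕜} {c : ℕ → 𝕜} {q μ s : 𝕜}
    (hf : ∀ z, ‖z‖ ≤ ‖s‖ → HasSum (fun m => c m * z ^ m) (f z)) (hq : ‖q‖ < 1) (hμ : ‖μ‖ ≤ 1) :
    ∃ S, HasSum (fun j : ℕ => f (s * μ ^ j) * q ^ j) S ∧
      HasSum (fun m : ℕ => c m * s ^ m / (1 - q * μ ^ m)) S := by
  have hμ_pow (m : ℕ) : ‖μ ^ m‖ ≤ 1 := by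
    rw [norm_pow]
    exact pow_le_one₀ (norm_nonneg μ) hμ
  refine exists_hasSum_of_hasSum_mul_pow (norm_nonneg q) hq
    (summable_norm_iff.mpr (hf s le_rfl).summable) (fun m => ?_) fun j => ?_
  · rw [norm_mul]
    exact mul_le_of_le_one_right (norm_nonneg q) (hμ_pow m)
  · have hmem : ‖s * μ ^ j‖ ≤ ‖s‖ := by
      rw [norm_mul]
      exact mul_le_of_le_one_right (norm_nonneg s) (hμ_pow j)
    refine ((hf _ hmem).mul_right (q ^ j)).congr_fun fun m => ?_
    ring

theorem hasSum_exp_sub_exp_mul (a z : ℝ) :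
    HasSum (fun m : ℕ => (1 - a ^ m) / m.factorial * z ^ m) (exp z - exp (a * z)) := by
  have hexp (y : ℝ) : HasSum (fun m : ℕ => y ^ m / m.factorial) (exp y) := by
    rw [exp_eq_exp_ℝ]
    exact NormedSpace.expSeries_div_hasSum_exp y
  refine ((hexp z).sub (hexp (a * z))).congr_fun fun m => ?_
  ring

theorem exists_hasSum_exp_zpow_sub {P : ℝ} (hP : 1 < P) (t : ℝ) (n : ℤ) :
    ∃ S,
      HasSum (fun j : ℕ =>
        (exp (-t * P ^ (2 * (n - j))) - exp (-t * P ^ (2 * (n - j) + 2))) * P ^ (n - j)) S ∧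
      HasSum (fun m : ℕ =>
        ((-1) ^ m * t ^ m / m.factorial) *
          ((1 - P ^ (2 * m)) / (1 - P ^ (-(2 * (m : ℤ) + 1)))) *
          (P ^ (-n)) ^ (-(2 * (m : ℤ) + 1))) S := by
  have hP₀ : P ≠ 0 := by positivity
  have hq : ‖P⁻¹‖ < 1 := by
    rw [norm_inv, norm_of_nonneg (by positivity)]
    exact inv_lt_one_of_one_lt₀ hP
  have hμ : ‖P⁻¹ ^ 2‖ ≤ 1 := by
    rw [norm_pow]
    exact pow_le_one₀ (norm_nonneg _) hq.le
  obtain ⟨S, hscale, hpow⟩ := exists_hasSum_dilation_mul_pow (s := -t * P ^ (2 * n))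
    (fun z _ => hasSum_exp_sub_exp_mul (P ^ 2) z) hq hμ
  refine ⟨P ^ n * S, (hscale.mul_left (P ^ n)).congr_fun fun j => ?_,
    (hpow.mul_left (P ^ n)).congr_fun fun m => ?_⟩
  · have hweight : P ^ (n - j) = P ^ n * P⁻¹ ^ j := by
      rw [zpow_sub₀ hP₀, zpow_natCast, inv_pow, div_eq_mul_inv]
    have hscale_sq : P ^ (2 * (n - j)) = P ^ (2 * n) * (P⁻¹ ^ 2) ^ j := by
      rw [mul_sub, zpow_sub₀ hP₀, zpow_mul P 2 j, zpow_natCast, inv_pow, inv_pow, div_eq_mul_inv]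
      norm_cast
    have hnext_sq : P ^ (2 * (n - j) + 2) = P ^ 2 * P ^ (2 * (n - j)) := by
      rw [zpow_add₀ hP₀, mul_comm]
      norm_cast
    rw [hnext_sq, hscale_sq, hweight]
    ring_nf
  · have hratio : P ^ (-(2 * (m : ℤ) + 1)) = P⁻¹ * (P⁻¹ ^ 2) ^ m := by
      rw [← pow_mul, ← pow_succ', inv_pow, zpow_neg]
      norm_cast
    have hnorm : (P ^ (-n)) ^ (-(2 * (m : ℤ) + 1)) = P ^ n * (P ^ (2 * n)) ^ m := by
      rw [← zpow_mul, ← zpow_natCast, ← zpow_mul, ← zpow_add₀ hP₀]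
      ring_nf
    rw [hratio, hnorm, ← pow_mul, mul_pow, neg_pow]
    ring

theorem hasSum_int_ite_le_iff {α : Type*} [AddCommMonoid α] [TopologicalSpace α]
    {f : ℤ → α} {n : ℤ} {S : α} :
    HasSum (fun k => if k ≤ n then f k else 0) S ↔ HasSum (fun j : ℕ => f (n - j)) S := by
  have hinj : Function.Injective fun j : ℕ => n - (j : ℤ) := fun i j h => by grind
  rw [← hinj.hasSum_iff fun k hk => if_neg fun hkn => hk ⟨(n - k).toNat, by grind⟩]
  simp [Function.comp_def]

theorem padic_heat_kernel_identity_general (p : ℕ) [Fact p.Prime] (x : ℚ_[p]) (hx : x ≠ 0)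
    (t : ℝ) :
    ∃ K,
      HasSum (fun k : ℤ =>
        (exp (-t * (p : ℝ) ^ (2 * k)) - exp (-t * (p : ℝ) ^ (2 * k + 2))) *
          (p : ℝ) ^ k * (if ‖x‖ ≤ (p : ℝ) ^ (-k) then 1 else 0)) K ∧
      HasSum (fun m : ℕ =>
        ((-1) ^ m * t ^ m / m.factorial) *
          ((1 - (p : ℝ) ^ (2 * m)) / (1 - (p : ℝ) ^ (-(2 * (m : ℤ) + 1)))) *
          ‖x‖ ^ (-(2 * (m : ℤ) + 1))) K := by
  have hp : 1 < (p : ℝ) := mod_cast (Fact.out : p.Prime).one_lt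
  obtain ⟨K, hscale, hpow⟩ := exists_hasSum_exp_zpow_sub hp t x.valuation
  rw [← Padic.norm_eq_zpow_neg_valuation hx] at hpow
  refine ⟨K, ?_, hpow⟩
  simp only [mul_ite, mul_one, mul_zero, Padic.norm_eq_zpow_neg_valuation hx,
    zpow_le_zpow_iff_right₀ hp, neg_le_neg_iff]
  exact hasSum_int_ite_le_iff.mpr hscale

/-- The two expressions for the heat kernel of the Taibleson–Vladimirov Laplacian
on `ℚ_p` agree for `x ≠ 0` and `t > 0`:
`Σ_{k∈ℤ} (e^{-tp^{2k}} − e^{-tp^{2k+2}}) p^k 𝟙[|x|_p ≤ p^{-k}]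
  = Σ_{m≥0} ((−1)^m t^m/m!) ((1 − p^{2m})/(1 − p^{-2m-1})) |x|_p^{-2m-1}`. -/
theorem padic_heat_kernel_identity (p : ℕ) [Fact p.Prime] (x : ℚ_[p]) (hx : x ≠ 0)
    (t : ℝ) (ht : 0 < t) :
    ∑' k : ℤ,
        (Real.exp (-t * (p : ℝ) ^ (2 * k)) - Real.exp (-t * (p : ℝ) ^ (2 * k + 2))) *
          (p : ℝ) ^ k * (if ‖x‖ ≤ (p : ℝ) ^ (-k) then 1 else 0) =
      ∑' m : ℕ,
        ((-1) ^ m * t ^ m / Nat.factorial m) *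
          ((1 - (p : ℝ) ^ (2 * m)) / (1 - (p : ℝ) ^ (-(2 * (m : ℤ) + 1)))) *
          ‖x‖ ^ (-(2 * (m : ℤ) + 1)) := by
  obtain ⟨_, hscale, hpow⟩ := padic_heat_kernel_identity_general p x hx t
  exact hscale.tsum_eq.trans hpow.tsum_eq.symm
end

section
/- Let p be a prime, let x ∈ ℚ_p with x ≠ 0, and let s be a real number with s > (p/|x|_p)². Then (1/(s|x|_p)) Σ_{m=0}^∞ ((−1)^m/(s^m |x|_p^{2m})) · ((1 − p^{2m})/(1 − p^{-2m-1})) = Σ_{k=−∞}^{∞} ((p² − 1)/((1 + p^{2k} s)(p² + p^{2k} s))) · p^k · 𝟙[|x|_p ≤ p^{k}]. -/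
open Real

/-!
Let `r = |x|_p = pⁿ` and `y = r²s`, so that `|y| > p²`. Expanding `1 / (1 - p^{-(2m+1)})` as a
geometric series in `j` turns the left-hand side into an absolutely convergent double series.
Summing first over `m`, the terms with a fixed `j` are a difference of two geometric series with
ratios `-1/Y` and `-p²/Y`, where `Y = p^{2j}y = p^{2(n+j)}s`. Their sums combine into the right-hand
term with `k = n + j`, and the indicator of the ball selects exactly the indices `k ≥ n`.
-/

section LambertSeries

variable {𝕜 : Type*} [NormedField 𝕜]

theorem summable_norm_pow_mul_one_sub_pow {c z : 𝕜} (hz : ‖z‖ < 1) (hcz : ‖z * c‖ < 1) :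
    Summable fun m : ℕ ↦ ‖z ^ m * (1 - c ^ m)‖ := by
  refine .of_nonneg_of_le (fun m ↦ norm_nonneg _) (fun m ↦ ?_)
    ((summable_norm_geometric_of_norm_lt_one hz).add (summable_norm_geometric_of_norm_lt_one hcz))
  rw [mul_sub, mul_one, ← mul_pow]
  exact norm_sub_le _ _

theorem tsum_neg_inv_pow_mul_one_sub_pow {c y : 𝕜} (hy : 1 < ‖y‖) (hcy : ‖c‖ < ‖y‖) :
    ∑' m : ℕ, (-y⁻¹) ^ m * (1 - c ^ m) = (c - 1) * y / ((1 + y) * (c + y)) := by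
  have hy0 : y ≠ 0 := norm_pos_iff.mp (one_pos.trans hy)
  have hz : ‖-y⁻¹‖ < 1 := by
    rw [norm_neg, norm_inv]
    exact inv_lt_one_of_one_lt₀ hy
  have hcz : ‖-y⁻¹ * c‖ < 1 := by
    rwa [norm_mul, norm_neg, norm_inv, inv_mul_lt_one₀ (one_pos.trans hy)]
  have h1y : 1 + y ≠ 0 := fun h ↦ hy.ne' <| by
    rw [eq_neg_of_add_eq_zero_right h, norm_neg, norm_one]
  have hc_add_y : c + y ≠ 0 := fun h ↦ hcy.ne' <| by
    rw [eq_neg_of_add_eq_zero_right h, norm_neg]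
  have h1z : 1 - -y⁻¹ = (1 + y) / y := by field_simp; ring
  have h1cz : 1 - -y⁻¹ * c = (c + y) / y := by field_simp; ring
  calc ∑' m : ℕ, (-y⁻¹) ^ m * (1 - c ^ m)
      = ∑' m : ℕ, ((-y⁻¹) ^ m - (-y⁻¹ * c) ^ m) := by simp only [mul_pow, mul_sub, mul_one]
    _ = (1 - -y⁻¹)⁻¹ - (1 - -y⁻¹ * c)⁻¹ := by
        rw [(summable_geometric_of_norm_lt_one hz).tsum_sub (summable_geometric_of_norm_lt_one hcz),
          tsum_geometric_of_norm_lt_one hz, tsum_geometric_of_norm_lt_one hcz]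
    _ = (c - 1) * y / ((1 + y) * (c + y)) := by
        rw [h1z, h1cz]
        field_simp
        ring

variable [CompleteSpace 𝕜]

theorem summable_mul_pow_of_nnnorm_le {ι : Type*} {a t : ι → 𝕜} {ρ : NNReal}
    (ha : Summable fun i ↦ ‖a i‖) (hρ : ρ < 1) (ht : ∀ i, ‖t i‖₊ ≤ ρ) :
    Summable fun x : ι × ℕ ↦ a x.1 * t x.1 ^ x.2 := by
  have hgeom : Summable fun j : ℕ ↦ (ρ : ℝ) ^ j := summable_geometric_of_lt_one ρ.2 hρ
  refine (ha.mul_of_nonneg hgeom (fun i ↦ norm_nonneg (a i)) fun j ↦ by positivity).of_norm_bounded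
    fun ⟨i, j⟩ ↦ ?_
  rw [norm_mul, norm_pow]
  gcongr
  exact ht i

theorem tsum_div_one_sub {ι : Type*} {a t : ι → 𝕜} {ρ : NNReal}
    (ha : Summable fun i ↦ ‖a i‖) (hρ : ρ < 1) (ht : ∀ i, ‖t i‖₊ ≤ ρ) :
    ∑' i, a i / (1 - t i) = ∑' j : ℕ, ∑' i, a i * t i ^ j := by
  have hrow (i : ι) : a i / (1 - t i) = ∑' j : ℕ, a i * t i ^ j := by
    rw [tsum_mul_left, tsum_geometric_of_norm_lt_one ((ht i).trans_lt hρ), div_eq_mul_inv]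
  rw [tsum_congr hrow]
  exact Summable.tsum_comm (f := fun j i ↦ a i * t i ^ j)
    (summable_mul_pow_of_nnnorm_le ha hρ ht).prod_symm

theorem tsum_neg_inv_pow_mul_one_sub_pow_div {b y : 𝕜} (hb : 1 < ‖b‖) (hy : ‖b‖ ^ 2 < ‖y‖) :
    ∑' m : ℕ, (-y⁻¹) ^ m * (1 - (b ^ 2) ^ m) / (1 - b⁻¹ ^ (2 * m + 1)) =
      ∑' j : ℕ, (b ^ 2 - 1) * (y * b ^ j) /
        ((1 + y * (b ^ j) ^ 2) * (b ^ 2 + y * (b ^ j) ^ 2)) := by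
  have hy1 : 1 < ‖y‖ := (one_lt_pow₀ hb two_ne_zero).trans hy
  have hq : ‖b⁻¹‖₊ < 1 := by
    rw [nnnorm_inv]
    exact inv_lt_one_of_one_lt₀ hb
  have hratio (m : ℕ) : ‖b⁻¹ ^ (2 * m + 1)‖₊ ≤ ‖b⁻¹‖₊ := by
    rw [nnnorm_pow]
    exact pow_le_of_le_one zero_le hq.le (Nat.succ_ne_zero _)
  have hcoeff : Summable fun m : ℕ ↦ ‖(-y⁻¹) ^ m * (1 - (b ^ 2) ^ m)‖ := by
    apply summable_norm_pow_mul_one_sub_pow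
    · rw [norm_neg, norm_inv]
      exact inv_lt_one_of_one_lt₀ hy1
    · rwa [norm_mul, norm_neg, norm_inv, norm_pow, inv_mul_lt_one₀ (one_pos.trans hy1)]
  rw [tsum_div_one_sub hcoeff hq hratio]
  refine tsum_congr fun j ↦ ?_
  have hyj : ‖y‖ ≤ ‖y * (b ^ j) ^ 2‖ := by
    rw [norm_mul, norm_pow, norm_pow]
    exact le_mul_of_one_le_right (norm_nonneg y) (one_le_pow₀ (one_le_pow₀ hb.le))
  have hterm (m : ℕ) : (-y⁻¹) ^ m * (1 - (b ^ 2) ^ m) * (b⁻¹ ^ (2 * m + 1)) ^ j =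
      (b ^ j)⁻¹ * ((-(y * (b ^ j) ^ 2)⁻¹) ^ m * (1 - (b ^ 2) ^ m)) := by
    rw [mul_inv, ← neg_mul, mul_pow, ← inv_pow, ← inv_pow]
    ring
  rw [tsum_congr hterm, tsum_mul_left, tsum_neg_inv_pow_mul_one_sub_pow (hy1.trans_le hyj)
    (by simpa only [norm_pow] using hy.trans_le hyj)]
  field_simp

end LambertSeries

theorem tsum_int_mul_ite_le {R : Type*} [NonAssocSemiring R] [TopologicalSpace R]
    (f : ℤ → R) (n : ℤ) :
    ∑' k : ℤ, f k * (if n ≤ k then 1 else 0) = ∑' j : ℕ, f (n + j) := by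
  have hinj : Function.Injective fun j : ℕ ↦ n + (j : ℤ) :=
    (add_right_injective n).comp Nat.cast_injective
  rw [← hinj.tsum_eq]
  · simp only [le_add_iff_nonneg_right, Nat.cast_nonneg, if_true, mul_one]
  · intro k hk
    have hnk : n ≤ k := by
      by_contra h
      exact hk (by simp only [if_neg h, mul_zero])
    exact ⟨(k - n).toNat, by simp only; omega⟩

theorem padic_laplace_transform_identity_general {𝕜 : Type*} [NormedField 𝕜] [CompleteSpace 𝕜]
    {b s : 𝕜} (n : ℤ) (hb : 1 < ‖b‖) (hs : (‖b‖ / ‖b ^ n‖) ^ 2 < ‖s‖) :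
    (1 / (s * b ^ n)) *
        ∑' m : ℕ,
          ((-1) ^ m / (s ^ m * (b ^ n) ^ (2 * m))) *
            ((1 - b ^ (2 * m)) / (1 - b ^ (-(2 * (m : ℤ) + 1)))) =
      ∑' k : ℤ,
        ((b ^ 2 - 1) / ((1 + b ^ (2 * k) * s) * (b ^ 2 + b ^ (2 * k) * s))) *
          b ^ k * (if n ≤ k then 1 else 0) := by
  have hb0 : b ≠ 0 := norm_pos_iff.mp (one_pos.trans hb)
  have hs0 : s ≠ 0 := norm_pos_iff.mp ((sq_nonneg _).trans_lt hs)
  have hr0 : b ^ n ≠ 0 := zpow_ne_zero n hb0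
  have hy : ‖b‖ ^ 2 < ‖s * (b ^ n) ^ 2‖ := by
    rwa [div_pow, div_lt_iff₀ (by positivity), ← norm_pow (b ^ n), ← norm_mul] at hs
  have hleft (m : ℕ) : (-1) ^ m / (s ^ m * (b ^ n) ^ (2 * m)) *
      ((1 - b ^ (2 * m)) / (1 - b ^ (-(2 * (m : ℤ) + 1)))) =
      (-(s * (b ^ n) ^ 2)⁻¹) ^ m * (1 - (b ^ 2) ^ m) / (1 - b⁻¹ ^ (2 * m + 1)) := by
    have hpow : b ^ (-(2 * (m : ℤ) + 1)) = b⁻¹ ^ (2 * m + 1) := by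
      rw [inv_pow, zpow_neg]
      norm_cast
    rw [hpow, pow_mul, pow_mul, ← mul_pow, ← div_pow, neg_div, one_div, mul_div_assoc]
  have hright (j : ℕ) : 1 / (s * b ^ n) * ((b ^ 2 - 1) * (s * (b ^ n) ^ 2 * b ^ j) /
      ((1 + s * (b ^ n) ^ 2 * (b ^ j) ^ 2) * (b ^ 2 + s * (b ^ n) ^ 2 * (b ^ j) ^ 2))) =
      (b ^ 2 - 1) / ((1 + b ^ (2 * (n + (j : ℤ))) * s) * (b ^ 2 + b ^ (2 * (n + (j : ℤ))) * s)) *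
        b ^ (n + (j : ℤ)) := by
    have hsq : b ^ (2 * (n + (j : ℤ))) * s = s * (b ^ n) ^ 2 * (b ^ j) ^ 2 := by
      rw [mul_comm 2, zpow_mul, zpow_add₀ hb0, zpow_natCast, zpow_ofNat]
      ring
    rw [hsq, zpow_add₀ hb0, zpow_natCast]
    field_simp
  rw [tsum_int_mul_ite_le, tsum_congr hleft, tsum_neg_inv_pow_mul_one_sub_pow_div hb hy,
    ← tsum_mul_left, tsum_congr hright]

/-- Nilsson's Laplace-transform identity for the heat kernel of the
Taibleson–Vladimirov Laplacian on `ℚ_p`: for `x ≠ 0` and real `s > (p/|x|_p)²`,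
`(1/(s|x|_p)) Σ_{m≥0} ((−1)^m/(s^m |x|_p^{2m})) (1 − p^{2m})/(1 − p^{-2m-1})
  = Σ_{k∈ℤ} ((p² − 1)/((1 + p^{2k}s)(p² + p^{2k}s))) p^k 𝟙[|x|_p ≤ p^k]`. -/
theorem padic_laplace_transform_identity (p : ℕ) [Fact p.Prime] (x : ℚ_[p]) (hx : x ≠ 0)
    (s : ℝ) (hs : ((p : ℝ) / ‖x‖) ^ 2 < s) :
    (1 / (s * ‖x‖)) *
        ∑' m : ℕ,
          ((-1) ^ m / (s ^ m * ‖x‖ ^ (2 * m))) *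
            ((1 - (p : ℝ) ^ (2 * m)) / (1 - (p : ℝ) ^ (-(2 * (m : ℤ) + 1)))) =
      ∑' k : ℤ,
        (((p : ℝ) ^ 2 - 1) / ((1 + (p : ℝ) ^ (2 * k) * s) * ((p : ℝ) ^ 2 + (p : ℝ) ^ (2 * k) * s))) *
          (p : ℝ) ^ k * (if ‖x‖ ≤ (p : ℝ) ^ k then 1 else 0) := by
  have hp : 1 < (p : ℝ) := mod_cast (Fact.out : p.Prime).one_lt
  obtain ⟨n, hn⟩ : ∃ n : ℤ, ‖x‖ = (p : ℝ) ^ n := ⟨_, Padic.norm_eq_zpow_neg_valuation hx⟩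
  simp only [hn, zpow_le_zpow_iff_right₀ hp] at hs ⊢
  refine padic_laplace_transform_identity_general n (by simpa using hp) ?_
  simpa using hs.trans_le (le_abs_self s)
end

section
/- Let p be a prime and let s be a real number with s > p². Then (1/s) Σ_{m=0}^∞ ((−1)^m / s^m) · ((1 − p^{2m})/(1 − p^{-2m-1})) = Σ_{k=0}^∞ ((p² − 1)/((1 + p^{2k} s)(p² + p^{2k} s))) · p^k, both series converging absolutely. -/
open Real

/-!
Expanding `1 / (1 - c q^m)` as a geometric series turns `∑ m, z^m / (1 - c q^m)` into the double
series `∑ m k, z^m c^k q^(m k)`, which is symmetric under exchanging `z` and `c`. The theorem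
is the difference of two instances of this symmetry, both with `c = x⁻¹` and `x⁻²` in place of `q`:
one at `z = -1 / s` and one at `z = -x² / s`.
-/

section GeometricLambert

variable {𝕜 : Type*} [NormedField 𝕜] {z c q : 𝕜}

lemma norm_mul_pow_le (c : 𝕜) (hq : ‖q‖ ≤ 1) (n : ℕ) : ‖c * q ^ n‖ ≤ ‖c‖ := by
  rw [norm_mul, norm_pow]
  exact mul_le_of_le_one_right (norm_nonneg c) (pow_le_one₀ (norm_nonneg q) hq)

lemma hasSum_pow_mul_pow_mul_pow (z : 𝕜) (hc : ‖c‖ < 1) (hq : ‖q‖ ≤ 1) (m : ℕ) :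
    HasSum (fun k : ℕ => z ^ m * c ^ k * q ^ (m * k)) (z ^ m / (1 - c * q ^ m)) := by
  simpa only [mul_pow, ← pow_mul, mul_assoc, div_eq_mul_inv] using
    (hasSum_geometric_of_norm_lt_one ((norm_mul_pow_le c hq m).trans_lt hc)).mul_left (z ^ m)

lemma summable_prod_pow_mul_pow_mul_pow [CompleteSpace 𝕜]
    (hz : ‖z‖ < 1) (hc : ‖c‖ < 1) (hq : ‖q‖ ≤ 1) :
    Summable fun i : ℕ × ℕ => z ^ i.1 * c ^ i.2 * q ^ (i.1 * i.2) := by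
  have majorant : Summable fun i : ℕ × ℕ => ‖z‖ ^ i.1 * ‖c‖ ^ i.2 :=
    (summable_geometric_of_lt_one (norm_nonneg z) hz).mul_of_nonneg
      (summable_geometric_of_lt_one (norm_nonneg c) hc)
      (fun _ => by positivity) (fun _ => by positivity)
  refine .of_norm_bounded majorant fun i => ?_
  simpa only [norm_mul, norm_pow] using norm_mul_pow_le (z ^ i.1 * c ^ i.2) hq (i.1 * i.2)

lemma summable_norm_pow_div_one_sub_mul_pow (hz : ‖z‖ < 1) (hc : ‖c‖ < 1) (hq : ‖q‖ ≤ 1) :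
    Summable fun m : ℕ => ‖z ^ m / (1 - c * q ^ m)‖ := by
  refine .of_nonneg_of_le (fun _ => norm_nonneg _) (fun m => ?_)
    ((summable_geometric_of_lt_one (norm_nonneg z) hz).div_const (1 - ‖c‖))
  have denom_bound : 1 - ‖c‖ ≤ ‖1 - c * q ^ m‖ := calc
    1 - ‖c‖ ≤ 1 - ‖c * q ^ m‖ := sub_le_sub_left (norm_mul_pow_le c hq m) 1
    _ ≤ ‖1 - c * q ^ m‖ := by simpa only [norm_one] using norm_sub_norm_le 1 (c * q ^ m)
  rw [norm_div, norm_pow]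
  have : 0 < 1 - ‖c‖ := sub_pos.mpr hc
  gcongr

theorem tsum_pow_div_one_sub_mul_pow_comm [CompleteSpace 𝕜]
    (hz : ‖z‖ < 1) (hc : ‖c‖ < 1) (hq : ‖q‖ ≤ 1) :
    ∑' m : ℕ, z ^ m / (1 - c * q ^ m) = ∑' k : ℕ, c ^ k / (1 - z * q ^ k) := calc
  ∑' m : ℕ, z ^ m / (1 - c * q ^ m)
  _ = ∑' (m : ℕ) (k : ℕ), z ^ m * c ^ k * q ^ (m * k) :=
    tsum_congr fun m => (hasSum_pow_mul_pow_mul_pow z hc hq m).tsum_eq.symm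
  _ = ∑' (k : ℕ) (m : ℕ), z ^ m * c ^ k * q ^ (m * k) :=
    Summable.tsum_comm (f := fun m k : ℕ => z ^ m * c ^ k * q ^ (m * k))
      (summable_prod_pow_mul_pow_mul_pow hz hc hq) |>.symm
  _ = ∑' k : ℕ, c ^ k / (1 - z * q ^ k) := tsum_congr fun k => by
    simpa only [mul_comm (c ^ k), mul_comm k] using (hasSum_pow_mul_pow_mul_pow c hz hq k).tsum_eq

end GeometricLambert

section Terms

variable {𝕜 : Type*} [Field 𝕜]

lemma neg_one_pow_div_mul_eq_sub (x s : 𝕜) (m : ℕ) :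
    ((-1) ^ m / s ^ m) * ((1 - x ^ (2 * m)) / (1 - x ^ (-(2 * (m : ℤ) + 1)))) =
      (-1 / s) ^ m / (1 - x⁻¹ * (x⁻¹ ^ 2) ^ m) -
        (-x ^ 2 / s) ^ m / (1 - x⁻¹ * (x⁻¹ ^ 2) ^ m) := by
  have zpow_eq : x ^ (-(2 * (m : ℤ) + 1)) = x⁻¹ * (x⁻¹ ^ 2) ^ m := by
    rw [← pow_mul, ← pow_succ', inv_pow, zpow_neg]
    norm_cast
  rw [zpow_eq, ← sub_div, div_pow, div_pow, neg_pow (x ^ 2), ← pow_mul]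
  ring

lemma div_mul_mul_pow_eq_sub {x s : 𝕜} (hx : x ≠ 0) (hs : s ≠ 0) {k : ℕ}
    (h₁ : 1 + x ^ (2 * k) * s ≠ 0) (h₂ : x ^ 2 + x ^ (2 * k) * s ≠ 0) :
    ((x ^ 2 - 1) / ((1 + x ^ (2 * k) * s) * (x ^ 2 + x ^ (2 * k) * s))) * x ^ k =
      1 / s * (x⁻¹ ^ k / (1 - -1 / s * (x⁻¹ ^ 2) ^ k) -
        x⁻¹ ^ k / (1 - -x ^ 2 / s * (x⁻¹ ^ 2) ^ k)) := by
  have factor (a : 𝕜) :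
      1 - -a / s * (x⁻¹ ^ 2) ^ k = (a + x ^ (2 * k) * s) / (x ^ (2 * k) * s) := by
    rw [← pow_mul, inv_pow]
    field_simp
    ring
  rw [factor, factor, inv_pow]
  field_simp
  ring

end Terms

lemma add_pow_mul_ne_zero {𝕜 : Type*} [NormedField 𝕜] {a x s : 𝕜}
    (hx : 1 ≤ ‖x‖) (has : ‖a‖ < ‖s‖) (n : ℕ) : a + x ^ n * s ≠ 0 := by
  intro h
  have norm_eq : ‖a‖ = ‖x‖ ^ n * ‖s‖ := by
    rw [eq_neg_of_add_eq_zero_left h, norm_neg, norm_mul, norm_pow]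
  exact has.not_ge (norm_eq ▸ le_mul_of_one_le_left (norm_nonneg s) (one_le_pow₀ hx))

theorem padic_laplace_transform_identity_at_one_general
    {𝕜 : Type*} [NormedField 𝕜] [CompleteSpace 𝕜] {x s : 𝕜}
    (hx : 1 < ‖x‖) (hs : ‖x‖ ^ 2 < ‖s‖) :
    Summable (fun m : ℕ =>
      ‖((-1) ^ m / s ^ m) * ((1 - x ^ (2 * m)) / (1 - x ^ (-(2 * (m : ℤ) + 1))))‖) ∧
    Summable (fun k : ℕ =>
      ‖((x ^ 2 - 1) / ((1 + x ^ (2 * k) * s) * (x ^ 2 + x ^ (2 * k) * s))) * x ^ k‖) ∧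
    (1 / s) * ∑' m : ℕ,
        ((-1) ^ m / s ^ m) * ((1 - x ^ (2 * m)) / (1 - x ^ (-(2 * (m : ℤ) + 1)))) =
      ∑' k : ℕ, ((x ^ 2 - 1) / ((1 + x ^ (2 * k) * s) * (x ^ 2 + x ^ (2 * k) * s))) * x ^ k := by
  have one_lt_s : 1 < ‖s‖ := (one_lt_pow₀ hx two_ne_zero).trans hs
  have hx₀ : x ≠ 0 := norm_pos_iff.mp (zero_lt_one.trans hx)
  have hs₀ : s ≠ 0 := norm_pos_iff.mp (zero_lt_one.trans one_lt_s)
  have hc : ‖x⁻¹‖ < 1 := norm_inv x ▸ inv_lt_one_of_one_lt₀ hx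
  have hq : ‖x⁻¹ ^ 2‖ ≤ 1 := norm_pow x⁻¹ 2 ▸ pow_le_one₀ (norm_nonneg _) hc.le
  have hz {a : 𝕜} (ha : ‖a‖ < ‖s‖) : ‖-a / s‖ < 1 := by
    rwa [norm_div, norm_neg, div_lt_one (norm_pos_iff.mpr hs₀)]
  have hz₁ : ‖-1 / s‖ < 1 := hz (norm_one.trans_lt one_lt_s)
  have hz₂ : ‖-x ^ 2 / s‖ < 1 := hz ((norm_pow x 2).trans_lt hs)
  simp only [neg_one_pow_div_mul_eq_sub, fun k => div_mul_mul_pow_eq_sub hx₀ hs₀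
    (add_pow_mul_ne_zero hx.le (norm_one.trans_lt one_lt_s) (2 * k))
    (add_pow_mul_ne_zero hx.le ((norm_pow x 2).trans_lt hs) (2 * k))]
  have row₁ := summable_norm_pow_div_one_sub_mul_pow hz₁ hc hq
  have row₂ := summable_norm_pow_div_one_sub_mul_pow hz₂ hc hq
  have col₁ := summable_norm_pow_div_one_sub_mul_pow hc hz₁ hq
  have col₂ := summable_norm_pow_div_one_sub_mul_pow hc hz₂ hq
  refine ⟨(row₁.add row₂).of_nonneg_of_le (fun _ => norm_nonneg _) fun _ => norm_sub_le _ _, ?_, ?_⟩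
  · simp only [norm_mul]
    exact ((col₁.add col₂).of_nonneg_of_le (fun _ => norm_nonneg _)
      fun _ => norm_sub_le _ _).mul_left _
  · rw [tsum_mul_left, row₁.of_norm.tsum_sub row₂.of_norm, col₁.of_norm.tsum_sub col₂.of_norm,
      tsum_pow_div_one_sub_mul_pow_comm hz₁ hc hq, tsum_pow_div_one_sub_mul_pow_comm hz₂ hc hq]

/-- The specialization `x = 1` of the Laplace-transform identity for the heat kernel
of the Taibleson–Vladimirov Laplacian on `ℚ_p`: for a prime `p` and real `s > p²`,
`(1/s) Σ_{m≥0} ((−1)^m/s^m) (1 − p^{2m})/(1 − p^{-2m-1})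
  = Σ_{k≥0} ((p² − 1)/((1 + p^{2k}s)(p² + p^{2k}s))) p^k`,
both series converging absolutely (in `ℝ`, `Summable` is absolute convergence). -/
theorem padic_laplace_transform_identity_at_one (p : ℕ) (hp : p.Prime)
    (s : ℝ) (hs : (p : ℝ) ^ 2 < s) :
    Summable (fun m : ℕ =>
      ((-1) ^ m / s ^ m) * ((1 - (p : ℝ) ^ (2 * m)) / (1 - (p : ℝ) ^ (-(2 * (m : ℤ) + 1))))) ∧
    Summable (fun k : ℕ =>
      (((p : ℝ) ^ 2 - 1) / ((1 + (p : ℝ) ^ (2 * k) * s) * ((p : ℝ) ^ 2 + (p : ℝ) ^ (2 * k) * s))) *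
        (p : ℝ) ^ k) ∧
    (1 / s) *
        ∑' m : ℕ,
          ((-1) ^ m / s ^ m) *
            ((1 - (p : ℝ) ^ (2 * m)) / (1 - (p : ℝ) ^ (-(2 * (m : ℤ) + 1)))) =
      ∑' k : ℕ,
        (((p : ℝ) ^ 2 - 1) /
            ((1 + (p : ℝ) ^ (2 * k) * s) * ((p : ℝ) ^ 2 + (p : ℝ) ^ (2 * k) * s))) *
          (p : ℝ) ^ k := by
  obtain ⟨hm, hk, h⟩ := padic_laplace_transform_identity_at_one_general (x := (p : ℝ)) (s := s)
    (by simpa using hp.one_lt) (by simpa using hs.trans_le (le_abs_self s))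
  exact ⟨hm.of_norm, hk.of_norm, h⟩
end

section
/- Let p be a prime and define ζ_p(s) = (p − 1)/(p^{2s} − p) and ξ_p(s) = sin(2πs) p^s ζ_p(s) for complex s. Then for every s ∈ ℂ with p^{2s} ≠ p and p^{2(1−s)} ≠ p, the functional equation ξ_p(1 − s) = ξ_p(s) holds; that is, sin(2π(1−s)) p^{1−s} (p − 1)/(p^{2(1−s)} − p) = sin(2πs) p^{s} (p − 1)/(p^{2s} − p). -/
open Real

/-!
For `a ≠ 0` one has `a ^ (2 * s) - a = a ^ s * (a ^ s - a ^ (1 - s))`, so that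
`ξ_a(s) = sin (2πs) * (a - 1) / (a ^ s - a ^ (1 - s))`. Under `s ↦ 1 - s` both the sine and the
denominator change sign.
-/

/-- The spectral zeta function `ζ_p(s) = (p - 1) / (p ^ {2s} - p)` of `ℚ_p/ℤ_p`, with the prime `p`
replaced by a complex number `a`, whose powers are taken with the principal logarithm. -/
noncomputable def spectralZeta (a s : ℂ) : ℂ :=
  (a - 1) / (a ^ (2 * s) - a)

/-- The completed spectral zeta function `ξ_a(s) = sin (2πs) a ^ s ζ_a(s)`, the form of
`spectralZeta` that is invariant under `s ↦ 1 - s`. -/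
noncomputable def completedSpectralZeta (a s : ℂ) : ℂ :=
  Complex.sin (2 * π * s) * a ^ s * spectralZeta a s

theorem sin_two_pi_mul_one_sub (s : ℂ) :
    Complex.sin (2 * π * (1 - s)) = -Complex.sin (2 * π * s) := by
  rw [mul_one_sub, Complex.sin_two_pi_sub]

section

variable {a : ℂ}

theorem cpow_two_mul_sub_self (ha : a ≠ 0) (s : ℂ) :
    a ^ (2 * s) - a = a ^ s * (a ^ s - a ^ (1 - s)) := by
  rw [mul_sub, ← Complex.cpow_add _ _ ha, ← Complex.cpow_add _ _ ha, ← two_mul,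
    add_sub_cancel, Complex.cpow_one]

theorem cpow_two_mul_eq_self_iff (ha : a ≠ 0) (s : ℂ) :
    a ^ (2 * s) = a ↔ a ^ s = a ^ (1 - s) := by
  have hpow : a ^ s ≠ 0 := Complex.cpow_ne_zero_iff.2 (.inl ha)
  rw [← sub_eq_zero, cpow_two_mul_sub_self ha, mul_eq_zero_iff_left hpow, sub_eq_zero]

theorem cpow_two_mul_one_sub_eq_self_iff (ha : a ≠ 0) (s : ℂ) :
    a ^ (2 * (1 - s)) = a ↔ a ^ (2 * s) = a := by
  rw [cpow_two_mul_eq_self_iff ha, cpow_two_mul_eq_self_iff ha, sub_sub_cancel, eq_comm]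

theorem padic_zeta_functional_equation_general (ha : a ≠ 0) {s : ℂ} (hs : a ^ (2 * s) ≠ a) :
    completedSpectralZeta a (1 - s) = completedSpectralZeta a s := by
  have hs' : a ^ (2 * (1 - s)) ≠ a := mt (cpow_two_mul_one_sub_eq_self_iff ha s).1 hs
  simp only [completedSpectralZeta, spectralZeta, ← mul_div_assoc]
  rw [div_eq_div_iff (sub_ne_zero.2 hs') (sub_ne_zero.2 hs), sin_two_pi_mul_one_sub,
    cpow_two_mul_sub_self ha s, cpow_two_mul_sub_self ha (1 - s), sub_sub_cancel]
  ring

end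

/-- Functional equation `ξ_p(1 − s) = ξ_p(s)` for the completed spectral zeta function
of `ℚ_p/ℤ_p`, where `ζ_p(s) = (p − 1)/(p^{2s} − p)` and `ξ_p(s) = sin(2πs) p^s ζ_p(s)`:
for every `s` with `p^{2s} ≠ p` and `p^{2(1−s)} ≠ p`,
`sin(2π(1−s)) p^{1−s} (p − 1)/(p^{2(1−s)} − p) = sin(2πs) p^s (p − 1)/(p^{2s} − p)`. -/
theorem padic_zeta_functional_equation (p : ℕ) (hp : p.Prime) (s : ℂ)
    (h1 : (p : ℂ) ^ (2 * s) ≠ (p : ℂ))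
    (h2 : (p : ℂ) ^ (2 * (1 - s)) ≠ (p : ℂ)) :
    Complex.sin (2 * π * (1 - s)) * (p : ℂ) ^ (1 - s) *
        ((p : ℂ) - 1) / ((p : ℂ) ^ (2 * (1 - s)) - p) =
      Complex.sin (2 * π * s) * (p : ℂ) ^ s * ((p : ℂ) - 1) / ((p : ℂ) ^ (2 * s) - p) := by
  simpa only [completedSpectralZeta, spectralZeta, ← mul_div_assoc] using
    padic_zeta_functional_equation_general (Nat.cast_ne_zero.2 hp.ne_zero) h1
end
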